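/- Suppose 0 < 1/n ≪ λ ≪ ε ≤ 1, k ∈ ℕ∖{1}, and R = (ε/3, a, d_{a,k}) is a regularity instance. Suppose P = P(k−1, a) is a (1/a_1, ε, a, λ)-equitable family of partitions and is an (ε, d_{a,k})-partition of an n-vertex k-graph H^(k). Then there exists a family of partitions Q = Q(k−1, a) which is an (ε + λ^{1/10}, a, d_{a,k})-equitable partition of H^(k). -/

import Mathlib

namespace HypReg

open Finset

attribute [local instance 10] Classical.propDecidable

noncomputable section

variable {V : Type*} [DecidableEq V]

/-- Representation of a 1-graph: the set of singletons of `U`. -/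
def sing (U : Finset V) : Finset (Finset V) :=
  U.image fun v => ({v} : Finset V)

/-- `Kset W j i B`: the i-element subsets of `W` all of whose j-element subsets lie in `B`. -/
def Kset (W : Finset V) (j i : ℕ) (B : Finset (Finset V)) : Finset (Finset V) :=
  (W.powersetCard i).filter fun S => ∀ T ∈ S.powersetCard j, T ∈ B

/-- Clique operator which, at level 1, uses the ambient family `cr` of crossing i-sets. -/
def KsetC (W : Finset V) (cr : Finset (Finset V)) (j i : ℕ) (B : Finset (Finset V)) :
    Finset (Finset V) :=
  if j = 1 then cr.filter fun S => ∀ v ∈ S, ({v} : Finset V) ∈ B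
  else Kset W j i B

/-- `A` (a (j+1)-graph) is (ε,d)-regular with respect to the j-graph `B` (plain clique sets). -/
def RegPair (W : Finset V) (j : ℕ) (ε d : ℝ) (A B : Finset (Finset V)) : Prop :=
  ∀ Q ⊆ B, ε * ((Kset W j (j+1) B).card : ℝ) ≤ ((Kset W j (j+1) Q).card : ℝ) →
    |((A ∩ Kset W j (j+1) Q).card : ℝ) - d * ((Kset W j (j+1) Q).card : ℝ)|
      ≤ ε * ((Kset W j (j+1) Q).card : ℝ)

/-- (ε,d)-regularity with crossing-aware clique sets. -/
def RegPairC (W : Finset V) (cr : Finset (Finset V)) (j : ℕ) (ε d : ℝ)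
    (A B : Finset (Finset V)) : Prop :=
  ∀ Q ⊆ B, ε * ((KsetC W cr j (j+1) B).card : ℝ) ≤ ((KsetC W cr j (j+1) Q).card : ℝ) →
    |((A ∩ KsetC W cr j (j+1) Q).card : ℝ) - d * ((KsetC W cr j (j+1) Q).card : ℝ)|
      ≤ ε * ((KsetC W cr j (j+1) Q).card : ℝ)

/-- Relative density `d(A | B)` of the (j+1)-graph `A` w.r.t. the j-graph `B`. -/
def dens (W : Finset V) (cr : Finset (Finset V)) (j : ℕ) (A B : Finset (Finset V)) : ℝ :=
  if (KsetC W cr j (j+1) B).card = 0 then 0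
  else ((A ∩ KsetC W cr j (j+1) B).card : ℝ) / ((KsetC W cr j (j+1) B).card : ℝ)

/-- `H` is a k-graph on the vertex set `W`. -/
def IsKGraph (W : Finset V) (k : ℕ) (H : Finset (Finset V)) : Prop :=
  ∀ e ∈ H, e ⊆ W ∧ e.card = k

/-- symmetric difference of two hypergraphs -/
def sd (A B : Finset (Finset V)) : Finset (Finset V) := (A \ B) ∪ (B \ A)

/-- A (candidate) family of partitions: the ground set, the class of each vertex and,
for each level `j ≥ 2`, the class of each crossing j-set. -/
structure PartFam (V : Type*) [DecidableEq V] where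
  gnd : Finset V
  vClass : V → Finset V
  cls : ℕ → Finset V → Finset (Finset V)

namespace PartFam

variable (F : PartFam V)

/-- crossing i-sets -/
def cross (i : ℕ) : Finset (Finset V) :=
  (F.gnd.powersetCard i).filter fun S =>
    ∀ u ∈ S, ∀ v ∈ S, u ≠ v → F.vClass u ≠ F.vClass v

/-- the level-j polyad of a vertex set `J` -/
def polyad (j : ℕ) (J : Finset V) : Finset (Finset V) :=
  if j = 1 then sing (J.sup F.vClass) else (J.powersetCard j).sup (F.cls j)

/-- the clique set `K_j(P̂^{(j-1)}(J))` of the (j−1)-polyad of a crossing j-set `J` -/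
def polyCliques (j : ℕ) (J : Finset V) : Finset (Finset V) :=
  KsetC F.gnd (F.cross j) (j-1) j (F.polyad (j-1) J)

/-- `F` is a family of partitions `P(k−1, a)`. -/
def IsFamily (k : ℕ) (a : ℕ → ℕ) : Prop :=
  (∀ v ∈ F.gnd, v ∈ F.vClass v) ∧
  (∀ v ∈ F.gnd, F.vClass v ⊆ F.gnd) ∧
  (∀ u ∈ F.gnd, ∀ v ∈ F.gnd, u ∈ F.vClass v → F.vClass u = F.vClass v) ∧
  (F.gnd.image F.vClass).card = a 1 ∧ k ≤ a 1 ∧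
  ∀ j, 2 ≤ j → j ≤ k - 1 →
    (∀ J ∈ F.cross j, J ∈ F.cls j J) ∧
    (∀ J ∈ F.cross j, ∀ I ∈ F.cls j J, F.cls j I = F.cls j J) ∧
    (∀ J ∈ F.cross j, F.cls j J ⊆ F.polyCliques j J) ∧
    (∀ J ∈ F.cross j, F.polyCliques j J ⊆ F.cross j) ∧
    (∀ J ∈ F.cross j, ((F.polyCliques j J).image (F.cls j)).card = a j)

/-- the regularity condition in the definition of an equitable family of partitions:
all polyad complexes of crossing k-sets are (ε, (1/a_2, …, 1/a_{k−1}))-regular. -/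
def PolyadReg (k : ℕ) (a : ℕ → ℕ) (ε : ℝ) : Prop :=
  ∀ K ∈ F.cross k, ∀ j, 2 ≤ j → j ≤ k - 1 → ∀ J ∈ K.powersetCard j,
    RegPairC F.gnd (F.cross j) (j-1) ε (1 / (a j : ℝ)) (F.polyad j K) (F.polyad (j-1) J)

/-- `(η, ε, a, λ)`-equitable family of partitions -/
def IsEquitable (k : ℕ) (a : ℕ → ℕ) (η ε lam : ℝ) : Prop :=
  1 ≤ η * (a 1 : ℝ) ∧
  (∀ v ∈ F.gnd, |((F.vClass v).card : ℝ) - (F.gnd.card : ℝ) / (a 1 : ℝ)|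
      ≤ lam * (F.gnd.card : ℝ) / (a 1 : ℝ)) ∧
  F.PolyadReg k a ε

/-- `(η, ε, a)`-equitable family of partitions (classes of size ⌊n/a₁⌋ or ⌊n/a₁⌋+1) -/
def IsEquitableE (k : ℕ) (a : ℕ → ℕ) (η ε : ℝ) : Prop :=
  1 ≤ η * (a 1 : ℝ) ∧
  (∀ v ∈ F.gnd, (F.vClass v).card = F.gnd.card / a 1 ∨
      (F.vClass v).card = F.gnd.card / a 1 + 1) ∧
  F.PolyadReg k a ε

/-- `G` is perfectly ε-regular with respect to `F`. -/
def PerfectlyRegular (k : ℕ) (ε : ℝ) (G : Finset (Finset V)) : Prop :=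
  ∀ K ∈ F.cross k, ∃ d : ℝ, 0 ≤ d ∧
    RegPairC F.gnd (F.cross k) (k-1) ε d G (F.polyad (k-1) K)

end PartFam

/-- `a` is a T-bounded vector of length k−1. -/
def BoundedVec (k T : ℕ) (a : ℕ → ℕ) : Prop := ∀ j, 1 ≤ j → j ≤ k - 1 → a j ≤ T

/-- level-j refinement `F^{(j)} ≺ P^{(j)}` between two families of partitions -/
def RefinesAt (F P : PartFam V) (j : ℕ) : Prop :=
  if j = 1 then ∀ v ∈ F.gnd, F.vClass v ⊆ P.vClass v
  else ∀ I ∈ F.cross j,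
    (∃ J ∈ P.cross j, F.cls j I ⊆ P.cls j J) ∨ ∀ S ∈ F.cls j I, S ∉ P.cross j

/-- level-j approximate refinement `F^{(j)} ≺_ν P^{(j)}` -/
def RefinesApproxAt (F P : PartFam V) (j : ℕ) (ν : ℝ) : Prop :=
  if j = 1 then
    ∃ f : Finset V → Finset V,
      (∀ v ∈ F.gnd, f (F.vClass v) ∈ F.gnd.image P.vClass) ∧
      ∑ C ∈ F.gnd.image F.vClass, ((C \ f C).card : ℝ) ≤ ν * (F.gnd.card : ℝ)
  else
    ∃ f : Finset (Finset V) → Finset (Finset V),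
      (∀ I ∈ F.cross j,
        f (F.cls j I) ∈ ((P.cross j).image (P.cls j)) ∪ {F.cross j \ P.cross j}) ∧
      ∑ C ∈ (F.cross j).image (F.cls j), ((C \ f C).card : ℝ) ≤ ν * ((F.cross j).card : ℝ)

/-- The address space: a base set (of class indices) together with a labelling of its subsets. -/
abbrev Addr := Finset ℕ × (Finset ℕ → ℕ)

/-- `x` is an element of the address space `Â(l, j, a)`. -/
def IsAddress (l j : ℕ) (a : ℕ → ℕ) (x : Addr) : Prop :=
  x.1.card = l ∧ (∀ i ∈ x.1, 1 ≤ i ∧ i ≤ a 1) ∧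
  (∀ L : Finset ℕ, L ⊆ x.1 → 2 ≤ L.card → L.card ≤ j → 1 ≤ x.2 L ∧ x.2 L ≤ a L.card) ∧
  (∀ L : Finset ℕ, ¬(L ⊆ x.1 ∧ 2 ≤ L.card ∧ L.card ≤ j) → x.2 L = 0)

/-- restriction `ŷ ≤ x̂` of an address to the base `B`, keeping levels up to `j`. -/
def restrictA (x : Addr) (j : ℕ) (B : Finset ℕ) : Addr :=
  (B, fun L => if L ⊆ B ∧ 2 ≤ L.card ∧ L.card ≤ j then x.2 L else 0)

/-- `d` is a density function of `Â(k, k−1, a)`. -/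
def DensityFun (k : ℕ) (a : ℕ → ℕ) (d : Addr → ℝ) : Prop :=
  ∀ x : Addr, IsAddress k (k-1) a x → 0 ≤ d x ∧ d x ≤ 1

/-- A family of partitions together with an `a`-labelling. -/
structure LabFam (V : Type*) [DecidableEq V] extends PartFam V where
  vIdx : V → ℕ
  lbl : ℕ → Finset V → ℕ

namespace LabFam

variable (F : LabFam V)

/-- `F` is a family of partitions with a legitimate `a`-labelling. -/
def IsLabeled (k : ℕ) (a : ℕ → ℕ) : Prop :=
  F.toPartFam.IsFamily k a ∧
  (∀ v ∈ F.gnd, 1 ≤ F.vIdx v ∧ F.vIdx v ≤ a 1) ∧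
  (∀ u ∈ F.gnd, ∀ v ∈ F.gnd, (F.vIdx u = F.vIdx v ↔ F.vClass u = F.vClass v)) ∧
  ∀ j, 2 ≤ j → j ≤ k - 1 →
    (∀ I ∈ F.toPartFam.cross j, 1 ≤ F.lbl j I ∧ F.lbl j I ≤ a j) ∧
    (∀ I ∈ F.toPartFam.cross j, ∀ I' ∈ F.cls j I, F.lbl j I' = F.lbl j I) ∧
    (∀ I ∈ F.toPartFam.cross j, ∀ I' ∈ F.toPartFam.cross j,
      F.toPartFam.polyad (j-1) I = F.toPartFam.polyad (j-1) I' →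
      F.lbl j I = F.lbl j I' → F.cls j I = F.cls j I')

/-- the address `x̂(L)` (up to level j) of a crossing set `L` -/
def addrOf (j : ℕ) (L : Finset V) : Addr :=
  (L.image F.vIdx,
   fun M => if M ⊆ L.image F.vIdx ∧ 2 ≤ M.card ∧ M.card ≤ j
     then F.lbl M.card (L.filter fun v => F.vIdx v ∈ M) else 0)

/-- the part `P^{(j)}(x̂, b)` -/
def partAt (j : ℕ) (x : Addr) (b : ℕ) : Finset (Finset V) :=
  if j ≤ 1 then (if x.1 = {b} then sing (F.gnd.filter fun v => F.vIdx v = b) else ∅)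
  else (F.toPartFam.cross j).filter fun I => F.addrOf (j-1) I = x ∧ F.lbl j I = b

/-- the polyad `P̂^{(j)}(x̂)` -/
def polyAt (j : ℕ) (x : Addr) : Finset (Finset V) :=
  if j = 1 then sing (F.gnd.filter fun v => F.vIdx v ∈ x.1)
  else (x.1.powersetCard j).sup fun B => F.partAt j (restrictA x (j-1) B) (x.2 B)

/-- `F` is an `(ε, d)`-partition of `H`. -/
def IsDensPartition (k : ℕ) (a : ℕ → ℕ) (ε : ℝ) (d : Addr → ℝ)
    (H : Finset (Finset V)) : Prop :=
  ∀ x : Addr, IsAddress k (k-1) a x →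
    RegPairC F.gnd (F.toPartFam.cross k) (k-1) ε (d x) H (F.polyAt (k-1) x)

/-- `F` is an `(ε, a, d)`-equitable partition of `H`. -/
def IsEquitPartition (k : ℕ) (a : ℕ → ℕ) (ε : ℝ) (d : Addr → ℝ)
    (H : Finset (Finset V)) : Prop :=
  F.IsLabeled k a ∧ F.toPartFam.IsEquitableE k a (1 / (a 1 : ℝ)) ε ∧
  F.IsDensPartition k a ε d H

end LabFam

/-- An ℓ-partite complex: vertex classes and, for each level, a partite graph. -/
structure Cx (V : Type*) [DecidableEq V] (l : ℕ) where
  C : Fin l → Finset V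
  G : ℕ → Finset (Finset V)

namespace Cx

variable {l : ℕ} (X : Cx V l)

def gnd : Finset V := Finset.univ.sup X.C

/-- crossing i-sets with respect to the classes of `X` -/
def cross (i : ℕ) : Finset (Finset V) :=
  (X.gnd.powersetCard i).filter fun S => ∀ t : Fin l, (S ∩ X.C t).card ≤ 1

/-- restriction of the level-j graph to the classes indexed by `L` -/
def restr (j : ℕ) (L : Finset (Fin l)) : Finset (Finset V) :=
  if j = 1 then sing (L.sup X.C) else (X.G j).filter fun e => e ⊆ L.sup X.C

/-- `X` is a complex with levels up to `k`. -/
def IsComplex (k : ℕ) : Prop :=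
  (∀ s t : Fin l, s ≠ t → Disjoint (X.C s) (X.C t)) ∧
  (∀ j, 2 ≤ j → j ≤ k → X.G j ⊆ X.cross j) ∧
  (∀ j, 3 ≤ j → j ≤ k → X.G j ⊆ Kset X.gnd (j-1) j (X.G (j-1)))

/-- `X` is an (ε, (d_2, …, d_k))-regular complex. -/
def IsRegular (k : ℕ) (ε : ℝ) (d : ℕ → ℝ) : Prop :=
  ∀ j, 2 ≤ j → j ≤ k → ∀ L ∈ (Finset.univ : Finset (Fin l)).powersetCard j,
    RegPairC X.gnd (X.cross j) (j-1) ε (d j) (X.G j) (X.restr (j-1) L)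

/-- The restricted complex `X[L]` is (ε, (d_2, …, d_{k−1}, p))-regular. -/
def RestrRegular (k : ℕ) (ε : ℝ) (d : ℕ → ℝ) (L : Finset (Fin l)) (p : ℝ) : Prop :=
  ∀ j, 2 ≤ j → j ≤ k → ∀ L' ∈ L.powersetCard j,
    RegPairC X.gnd (X.cross j) (j-1) ε (if j = k then p else d j)
      (X.restr j L) (X.restr (j-1) L')

/-- clique set `K_i` of the level-j graph of the complex (level 1: crossing sets). -/
def KsetLvl (j i : ℕ) : Finset (Finset V) :=
  if j ≤ 1 then X.cross i else Kset X.gnd j i (X.G j)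

end Cx

/-- `eCL`, `mCL` satisfy the counting lemma of Kohayakawa–Rödl–Skokan. -/
def CountingProp (eCL : ℝ → ℝ → ℕ → ℕ → ℝ) (mCL : ℝ → ℝ → ℕ → ℕ → ℕ) : Prop :=
  ∀ γ d₀ : ℝ, 0 < γ → 0 < d₀ → ∀ k l : ℕ, 2 ≤ k → k ≤ l →
    (0 < eCL γ d₀ k l ∧ eCL γ d₀ k l ≤ 1) ∧
    ∀ (V₀ : Type) [DecidableEq V₀], ∀ (X : Cx V₀ l) (m : ℕ) (lam ε : ℝ) (d : ℕ → ℝ),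
      0 ≤ lam → lam < 1/4 → 0 < ε → ε ≤ eCL γ d₀ k l → mCL γ d₀ k l ≤ m →
      (∀ j, 2 ≤ j → j ≤ k → d₀ ≤ d j) →
      X.IsComplex k →
      (∀ i, |((X.C i).card : ℝ) - (m : ℝ)| ≤ lam * m) →
      X.IsRegular k ε d →
      |((Kset X.gnd k l (X.G k)).card : ℝ) -
        (∏ j ∈ Finset.Icc 2 k, d j ^ (l.choose j)) * ∏ i, ((X.C i).card : ℝ)|
        ≤ γ * ((∏ j ∈ Finset.Icc 2 k, d j ^ (l.choose j)) * ∏ i, ((X.C i).card : ℝ))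

/-- `eRI` is a legitimate function for defining regularity instances. -/
def GoodERI (eRI : ℕ → ℕ → ℝ) : Prop :=
  (∀ t k : ℕ, 1 ≤ t → 2 ≤ k → 0 < eRI t k ∧ eRI t k ≤ 1) ∧
  (∀ k t t' : ℕ, 1 ≤ t → t ≤ t' → eRI t' k ≤ eRI t k) ∧
  (∀ t k k' : ℕ, 2 ≤ k → k ≤ k' → eRI t k' ≤ eRI t k) ∧
  (∀ k : ℕ, Filter.Tendsto (fun t => eRI t k) Filter.atTop (nhds 0)) ∧
  ∃ (eCL : ℝ → ℝ → ℕ → ℕ → ℝ) (mCL : ℝ → ℝ → ℕ → ℕ → ℕ),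
    CountingProp eCL mCL ∧
    ∀ t k : ℕ, 1 ≤ t → 2 ≤ k →
      eRI t k < eCL (1/(t:ℝ)) (1/(t:ℝ)) (k-1) k / (4 * (t:ℝ) ^ (4^k))

/-- `max_i a_i` over `i ∈ [k−1]` -/
def maxA (k : ℕ) (a : ℕ → ℕ) : ℕ := (Finset.Icc 1 (k-1)).sup a

/-- `(ε, a, d)` is a regularity instance. -/
def RegInstance (eRI : ℕ → ℕ → ℝ) (k : ℕ) (ε : ℝ) (a : ℕ → ℕ) (d : Addr → ℝ) : Prop :=
  2 ≤ k ∧ (∀ j, 1 ≤ j → j ≤ k - 1 → 1 ≤ a j) ∧ 0 < ε ∧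
  ε ≤ eRI (maxA k a) k ∧ DensityFun k a d

section Counting

variable {W : Type} [Fintype W] [DecidableEq W]

/-- `S` spans an induced copy of `Fg` in `H` (both k-graphs). -/
def InducedCopy (Fg : Finset (Finset W)) (H : Finset (Finset V)) (k : ℕ) (S : Finset V) :
    Prop :=
  ∃ e : W → V, Function.Injective e ∧ Finset.univ.image e = S ∧
    ∀ A : Finset W, A.card = k → (A.image e ∈ H ↔ A ∈ Fg)

/-- the size of the automorphism group of `Fg` -/
def AutCount (Fg : Finset (Finset W)) : ℕ :=
  Nat.card {π : W ≃ W // ∀ A : Finset W, A.image π ∈ Fg ↔ A ∈ Fg}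

/-- the number `IC_σ(F, H)` of σ-induced copies of `Fg` in the complex `X` -/
def ICosig {l : ℕ} (X : Cx V l) (k : ℕ) (Fg : Finset (Finset W)) (σ : W ≃ Fin l) : ℕ :=
  Set.ncard {e : W → V |
    (∀ v, e v ∈ X.C (σ v)) ∧
    Finset.univ.image e ∈ X.KsetLvl (k-1) l ∧
    ∀ A : Finset W, A.card = k → (A.image e ∈ X.G k ↔ A ∈ Fg)}

/-- `IC(F, d, x̂, σ)` -/
def ICs (Fg : Finset (Finset W)) (k l : ℕ) (a : ℕ → ℕ) (d : Addr → ℝ)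
    (x : Addr) (σ : W → ℕ) : ℝ :=
  (∏ B ∈ x.1.powersetCard k,
    if ∃ A ∈ Fg, A.image σ = B then d (restrictA x (k-1) B)
    else 1 - d (restrictA x (k-1) B)) *
  ∏ j ∈ Finset.Icc 2 (k-1), ((a j : ℝ) ^ (l.choose j))⁻¹

/-- `IC(F, d, x̂)` -/
def ICa (Fg : Finset (Finset W)) (k l : ℕ) (a : ℕ → ℕ) (d : Addr → ℝ) (x : Addr) : ℝ :=
  (AutCount Fg : ℝ)⁻¹ *
    ∑ᶠ σ ∈ {σ : W → ℕ | Set.BijOn σ Set.univ ↑x.1}, ICs Fg k l a d x σ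

/-- `IC(F, d)` -/
def IC (Fg : Finset (Finset W)) (k l : ℕ) (a : ℕ → ℕ) (d : Addr → ℝ) : ℝ :=
  (((a 1).choose l : ℝ))⁻¹ * ∑ᶠ x ∈ {x : Addr | IsAddress l (k-1) a x}, ICa Fg k l a d x

end Counting

end

end HypReg
namespace HypReg

open Finset

/-! If the vertex classes are almost equal, there is an idempotent map `φ` of the vertex set that
moves at most `2 * lam * n` vertices and whose pullback of the vertex partition is as equal as
possible. Pull the whole labelled family back along `φ`: a set `e` lies in the class of `J` if and
only if `φ '' e` lies in the class of `φ '' J`. Polyads, their cliques and their addresses are then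
pulled back too, so all incidence and labelling axioms are inherited. Regularity is affected only
through cliques meeting moved vertices. There are at most `2 * lam * n ^ j` of these, which is
negligible against the `c * n ^ j` cliques that the counting lemma finds in every polyad; here `c`
depends on `k` and `ε` only, because the regularity instance bounds all the `a j` in terms of
them. -/

section

attribute [local instance 10] Classical.propDecidable

theorem exists_mem_powersetCard_superset {α : Type*} {A e : Finset α} {i : ℕ} (hA : A ⊆ e)
    (hAi : A.card ≤ i) (hi : i ≤ e.card) : ∃ T ∈ e.powersetCard i, A ⊆ T := by
  obtain ⟨T, hAT, hTe, hT⟩ := exists_subsuperset_card_eq hA hAi hi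
  exact ⟨T, mem_powersetCard.2 ⟨hTe, hT⟩, hAT⟩

theorem subset_of_powersetCard_subset {α : Type*} {e U : Finset α} {i : ℕ}
    {B : Finset (Finset α)} (hi : 1 ≤ i) (he : i ≤ e.card) (hB : ∀ T ∈ B, T ⊆ U)
    (h : e.powersetCard i ⊆ B) : e ⊆ U := by
  intro v hv
  obtain ⟨T, hT, hvT⟩ := exists_mem_powersetCard_superset (singleton_subset_iff.2 hv)
    (by simpa using hi) he
  exact hB T (h hT) (hvT (mem_singleton_self v))

variable {V : Type*} [DecidableEq V]

theorem image_filter_mem_eq {α β : Type*} [DecidableEq β] {f : α → β} {A : Finset α}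
    {M : Finset β} (hM : M ⊆ A.image f) : (A.filter (f · ∈ M)).image f = M := by
  rw [← filter_image (p := (· ∈ M)), filter_mem_eq_inter, inter_eq_right.2 hM]

theorem singleton_mem_sing {U : Finset V} {v : V} : {v} ∈ sing U ↔ v ∈ U := by
  simp [sing]

theorem mem_KsetC {W : Finset V} {cr B : Finset (Finset V)} {i j : ℕ} {e : Finset V} :
    e ∈ KsetC W cr i j B ↔
      e ∈ (if i = 1 then cr else W.powersetCard j) ∧ ∀ T ∈ e.powersetCard i, T ∈ B := by
  unfold KsetC Kset
  split_ifs with h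
  · subst h
    simp [powersetCard_one]
  · simp

theorem KsetC_subset_powersetCard {W : Finset V} {cr B : Finset (Finset V)} {i j : ℕ}
    (hcr : cr ⊆ W.powersetCard j) : KsetC W cr i j B ⊆ W.powersetCard j := by
  intro e he
  have := (mem_KsetC.1 he).1
  split_ifs at this
  exacts [hcr this, this]

theorem KsetC_restrict {U W : Finset V} {cr B : Finset (Finset V)} {i j : ℕ} (hi : 1 ≤ i)
    (hij : i ≤ j) (hUW : U ⊆ W) (hcr : cr ⊆ W.powersetCard j) (hB : ∀ T ∈ B, T ⊆ U) :
    KsetC U (cr.filter (· ⊆ U)) i j B = KsetC W cr i j B := by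
  ext e
  by_cases he : e ∈ W.powersetCard j
  · obtain ⟨heW, rfl⟩ := mem_powersetCard.1 he
    have heU : e.powersetCard i ⊆ B → e ⊆ U := subset_of_powersetCard_subset hi hij hB
    simp only [mem_KsetC]
    refine and_congr_left fun he => ?_
    split_ifs
    · simp [heU he]
    · simp [heU he, heW]
  · have hU : cr.filter (· ⊆ U) ⊆ U.powersetCard j := fun S hS => by
      obtain ⟨hS, hSU⟩ := mem_filter.1 hS
      exact mem_powersetCard.2 ⟨hSU, (mem_powersetCard.1 (hcr hS)).2⟩
    exact iff_of_false (fun h => he (powersetCard_mono hUW (KsetC_subset_powersetCard hU h)))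
      (fun h => he (KsetC_subset_powersetCard hcr h))

/-! ### Families of partitions -/

namespace PartFam

variable {F : PartFam V} {k : ℕ} {a : ℕ → ℕ} {i j m : ℕ} {I J K L S T : Finset V} {u v : V}

theorem mem_cross : S ∈ F.cross i ↔ S ⊆ F.gnd ∧ S.card = i ∧ Set.InjOn F.vClass S := by
  simp only [cross, mem_filter, mem_powersetCard, Set.InjOn, mem_coe, and_assoc, ne_eq,
    not_imp_not]

theorem subset_gnd_of_mem_cross (hS : S ∈ F.cross i) : S ⊆ F.gnd := (mem_cross.1 hS).1

theorem card_of_mem_cross (hS : S ∈ F.cross i) : S.card = i := (mem_cross.1 hS).2.1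

theorem injOn_vClass_of_mem_cross (hS : S ∈ F.cross i) : Set.InjOn F.vClass S :=
  (mem_cross.1 hS).2.2

theorem mem_cross_of_mem_powersetCard (hS : S ∈ F.cross i) (hT : T ∈ S.powersetCard j) :
    T ∈ F.cross j := by
  obtain ⟨hSg, -, hinj⟩ := mem_cross.1 hS
  obtain ⟨hTS, hT⟩ := mem_powersetCard.1 hT
  exact mem_cross.2 ⟨hTS.trans hSg, hT, hinj.mono hTS⟩

theorem KsetC_subset_cross {B : Finset (Finset V)} (h1 : 1 ≤ i) (hB : B ⊆ F.cross i) :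
    KsetC F.gnd (F.cross (i + 1)) i (i + 1) B ⊆ F.cross (i + 1) := by
  intro S hS
  obtain ⟨hSc, hSB⟩ := mem_KsetC.1 hS
  split_ifs at hSc with h
  · exact hSc
  · obtain ⟨hSg, hScard⟩ := mem_powersetCard.1 hSc
    refine mem_cross.2 ⟨hSg, hScard, fun u hu v hv huv => ?_⟩
    obtain ⟨T, hT, huvT⟩ := exists_mem_powersetCard_superset (i := i)
      (insert_subset hu (singleton_subset_iff.2 hv)) (card_le_two.trans (by omega)) (by omega)
    exact injOn_vClass_of_mem_cross (hB (hSB T hT)) (huvT (by simp)) (huvT (by simp)) huv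

theorem polyad_one : F.polyad 1 J = sing (J.sup F.vClass) := if_pos rfl

theorem singleton_mem_polyad_one : {v} ∈ F.polyad 1 J ↔ ∃ u ∈ J, v ∈ F.vClass u := by
  rw [polyad_one, singleton_mem_sing, mem_sup]

theorem mem_polyad_one : T ∈ F.polyad 1 J ↔ ∃ u ∈ J, ∃ v ∈ F.vClass u, {v} = T := by
  simp only [polyad_one, sing, mem_image, mem_sup]
  exact ⟨fun ⟨v, ⟨u, hu, hv⟩, h⟩ => ⟨u, hu, v, hv, h⟩, fun ⟨u, hu, v, hv, h⟩ => ⟨v, ⟨u, hu, hv⟩, h⟩⟩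

theorem mem_polyad (hj : j ≠ 1) : T ∈ F.polyad j J ↔ ∃ S ∈ J.powersetCard j, T ∈ F.cls j S := by
  simp only [polyad, if_neg hj, mem_sup]

theorem polyad_mono (h : I ⊆ J) : F.polyad j I ⊆ F.polyad j J := by
  unfold polyad
  split_ifs
  · exact image_subset_image (sup_mono h)
  · exact sup_mono (powersetCard_mono h)

theorem mem_polyCliques : I ∈ F.polyCliques (i + 1) J ↔
    I ∈ (if i = 1 then F.cross (i + 1) else F.gnd.powersetCard (i + 1)) ∧
      ∀ T ∈ I.powersetCard i, T ∈ F.polyad i J := by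
  simp only [polyCliques, mem_KsetC, Nat.add_sub_cancel]

namespace IsFamily

theorem mem_vClass_self (hF : F.IsFamily k a) (hv : v ∈ F.gnd) : v ∈ F.vClass v := hF.1 v hv

theorem vClass_subset (hF : F.IsFamily k a) (hv : v ∈ F.gnd) : F.vClass v ⊆ F.gnd := hF.2.1 v hv

theorem mem_vClass_iff (hF : F.IsFamily k a) (hu : u ∈ F.gnd) (hv : v ∈ F.gnd) :
    u ∈ F.vClass v ↔ F.vClass u = F.vClass v :=
  ⟨hF.2.2.1 u hu v hv, fun h => h ▸ hF.mem_vClass_self hu⟩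

theorem vClass_eq (hF : F.IsFamily k a) (hv : v ∈ F.gnd) (hu : u ∈ F.vClass v) :
    F.vClass u = F.vClass v :=
  (hF.mem_vClass_iff (hF.vClass_subset hv hu) hv).1 hu

theorem card_image_vClass (hF : F.IsFamily k a) : (F.gnd.image F.vClass).card = a 1 := hF.2.2.2.1

theorem le_a_one (hF : F.IsFamily k a) : k ≤ a 1 := hF.2.2.2.2.1

theorem mem_cls_self (hF : F.IsFamily k a) (h2 : 2 ≤ j) (hk : j ≤ k - 1) (hJ : J ∈ F.cross j) :
    J ∈ F.cls j J :=
  (hF.2.2.2.2.2 j h2 hk).1 J hJ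

theorem cls_eq (hF : F.IsFamily k a) (h2 : 2 ≤ j) (hk : j ≤ k - 1) (hJ : J ∈ F.cross j)
    (hI : I ∈ F.cls j J) : F.cls j I = F.cls j J :=
  (hF.2.2.2.2.2 j h2 hk).2.1 J hJ I hI

theorem cls_subset_polyCliques (hF : F.IsFamily k a) (h2 : 2 ≤ j) (hk : j ≤ k - 1)
    (hJ : J ∈ F.cross j) : F.cls j J ⊆ F.polyCliques j J :=
  (hF.2.2.2.2.2 j h2 hk).2.2.1 J hJ

theorem cls_subset_cross (hF : F.IsFamily k a) (h2 : 2 ≤ j) (hk : j ≤ k - 1) (hJ : J ∈ F.cross j) :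
    F.cls j J ⊆ F.cross j :=
  (hF.cls_subset_polyCliques h2 hk hJ).trans ((hF.2.2.2.2.2 j h2 hk).2.2.2.1 J hJ)

theorem card_image_cls (hF : F.IsFamily k a) (h2 : 2 ≤ j) (hk : j ≤ k - 1) (hJ : J ∈ F.cross j) :
    ((F.polyCliques j J).image (F.cls j)).card = a j :=
  (hF.2.2.2.2.2 j h2 hk).2.2.2.2 J hJ

theorem polyad_subset_cross (hF : F.IsFamily k a) (hk : j ≤ k - 1) (h1 : 1 ≤ j)
    (hJ : J ∈ F.cross i) : F.polyad j J ⊆ F.cross j := by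
  intro T hT
  rcases h1.eq_or_lt with rfl | h2
  · obtain ⟨u, hu, v, hv, rfl⟩ := mem_polyad_one.1 hT
    simpa [mem_cross] using hF.vClass_subset (subset_gnd_of_mem_cross hJ hu) hv
  · obtain ⟨S, hS, hT⟩ := (mem_polyad h2.ne').1 hT
    exact hF.cls_subset_cross h2 hk (mem_cross_of_mem_powersetCard hJ hS) hT

theorem mem_polyad_self (hF : F.IsFamily k a) (hk : j ≤ k - 1) (h1 : 1 ≤ j) (hJ : J ∈ F.cross i)
    (hT : T ∈ J.powersetCard j) : T ∈ F.polyad j J := by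
  rcases h1.eq_or_lt with rfl | h2
  · obtain ⟨v, hv, rfl⟩ := by simpa [powersetCard_one] using hT
    exact singleton_mem_polyad_one.2 ⟨v, hv, hF.mem_vClass_self (subset_gnd_of_mem_cross hJ hv)⟩
  · exact (mem_polyad h2.ne').2
      ⟨T, hT, hF.mem_cls_self h2 hk (mem_cross_of_mem_powersetCard hJ hT)⟩

theorem polyad_subset_polyad (hF : F.IsFamily k a) (hk : j ≤ k - 1) (h1 : 1 ≤ j)
    (hJ : J ∈ F.cross m) (h : I.powersetCard j ⊆ F.polyad j J) : F.polyad j I ⊆ F.polyad j J := by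
  intro T hT
  rcases h1.eq_or_lt with rfl | h2
  · obtain ⟨u, hu, v, hv, rfl⟩ := mem_polyad_one.1 hT
    have hmem : {u} ∈ I.powersetCard 1 := by simpa using hu
    obtain ⟨w, hw, huw⟩ := singleton_mem_polyad_one.1 (h hmem)
    rw [hF.vClass_eq (subset_gnd_of_mem_cross hJ hw) huw] at hv
    exact singleton_mem_polyad_one.2 ⟨w, hw, hv⟩
  · obtain ⟨S, hS, hT⟩ := (mem_polyad h2.ne').1 hT
    obtain ⟨S', hS', hSS'⟩ := (mem_polyad h2.ne').1 (h hS)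
    rw [hF.cls_eq h2 hk (mem_cross_of_mem_powersetCard hJ hS') hSS'] at hT
    exact (mem_polyad h2.ne').2 ⟨S', hS', hT⟩

theorem powersetCard_subset_polyad_of_mem_succ (hF : F.IsFamily k a) (h1 : 1 ≤ i)
    (hk : i + 1 ≤ k - 1) (hL : L ∈ F.cross m) (hS : S ∈ F.polyad (i + 1) L) :
    S.powersetCard i ⊆ F.polyad i L := by
  obtain ⟨S', hS', hSS'⟩ := (mem_polyad (by omega)).1 hS
  have hclq := hF.cls_subset_polyCliques (by omega) hk (mem_cross_of_mem_powersetCard hL hS') hSS'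
  exact fun T hT => polyad_mono (mem_powersetCard.1 hS').1 ((mem_polyCliques.1 hclq).2 T hT)

theorem powersetCard_subset_polyad (hF : F.IsFamily k a) (hk : i ≤ k - 1) (hL : L ∈ F.cross m)
    (hS : S ∈ F.polyad i L) (h1 : 1 ≤ j) (hj : j ≤ i) : S.powersetCard j ⊆ F.polyad j L := by
  induction i, hj using Nat.le_induction generalizing S with
  | base =>
    have hc := card_of_mem_cross (hF.polyad_subset_cross hk h1 hL hS)
    rw [← hc, powersetCard_self, hc]
    exact singleton_subset_iff.2 hS
  | succ i hi ih =>
    intro T hT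
    obtain ⟨hTS, hTj⟩ := mem_powersetCard.1 hT
    have hc := card_of_mem_cross (hF.polyad_subset_cross hk (by omega) hL hS)
    obtain ⟨R, hR, hTR⟩ := exists_mem_powersetCard_superset hTS (hTj.trans_le hi) (by omega)
    exact ih (by omega) (hF.powersetCard_subset_polyad_of_mem_succ (by omega) hk hL hS hR)
      (mem_powersetCard.2 ⟨hTR, hTj⟩)

theorem polyCliques_subset_cross (hF : F.IsFamily k a) (h1 : 1 ≤ i) (hk : i ≤ k - 1)
    (hL : L ∈ F.cross m) : F.polyCliques (i + 1) L ⊆ F.cross (i + 1) :=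
  KsetC_subset_cross h1 (hF.polyad_subset_cross hk h1 hL)

theorem powersetCard_subset_polyad_of_mem_polyCliques (hF : F.IsFamily k a) (hk : i ≤ k - 1)
    (hL : L ∈ F.cross m) (hS : S ∈ F.polyCliques (i + 1) L) (h1 : 1 ≤ j) (hj : j ≤ i) :
    S.powersetCard j ⊆ F.polyad j L := by
  intro T hT
  obtain ⟨hTS, hTj⟩ := mem_powersetCard.1 hT
  have hc := card_of_mem_cross (hF.polyCliques_subset_cross (h1.trans hj) hk hL hS)
  obtain ⟨R, hR, hTR⟩ := exists_mem_powersetCard_superset hTS (hTj.trans_le hj) (by omega)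
  exact hF.powersetCard_subset_polyad hk hL ((mem_polyCliques.1 hS).2 R hR) h1 hj
    (mem_powersetCard.2 ⟨hTR, hTj⟩)

theorem polyCliques_subset_polyCliques (hF : F.IsFamily k a) (h1 : 1 ≤ i) (hk : i ≤ k - 1)
    (hJ : J ∈ F.cross m) (hI : I ∈ F.polyCliques (i + 1) J) :
    F.polyCliques (i + 1) I ⊆ F.polyCliques (i + 1) J := by
  intro S hS
  obtain ⟨hSc, hSp⟩ := mem_polyCliques.1 hS
  exact mem_polyCliques.2
    ⟨hSc, fun T hT => hF.polyad_subset_polyad hk h1 hJ (mem_polyCliques.1 hI).2 (hSp T hT)⟩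

theorem subset_sup_vClass_of_mem_polyad (hF : F.IsFamily k a) (h1 : 1 ≤ i) (hk : i ≤ k - 1)
    (hJ : J ∈ F.cross m) (hT : T ∈ F.polyad i J) : T ⊆ J.sup F.vClass := by
  intro v hv
  have hmem : {v} ∈ T.powersetCard 1 := by simpa using hv
  exact mem_sup.2 (singleton_mem_polyad_one.1
    (hF.powersetCard_subset_polyad hk hJ hT le_rfl h1 hmem))

theorem sup_vClass_subset_gnd (hF : F.IsFamily k a) (hJ : J ∈ F.cross m) :
    J.sup F.vClass ⊆ F.gnd :=
  Finset.sup_le fun _ hv => hF.vClass_subset (subset_gnd_of_mem_cross hJ hv)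

theorem image_vClass_subset (hF : F.IsFamily k a) (hJ : J ∈ F.cross m)
    (hT : T ⊆ J.sup F.vClass) : T.image F.vClass ⊆ J.image F.vClass := by
  refine image_subset_iff.2 fun v hv => ?_
  obtain ⟨u, hu, hvu⟩ := mem_sup.1 (hT hv)
  exact mem_image.2 ⟨u, hu, (hF.vClass_eq (subset_gnd_of_mem_cross hJ hu) hvu).symm⟩

theorem image_vClass_eq (hF : F.IsFamily k a) (hJ : J ∈ F.cross m) (hT : T ∈ F.cross m)
    (hTJ : T ⊆ J.sup F.vClass) : T.image F.vClass = J.image F.vClass := by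
  refine eq_of_subset_of_card_le (hF.image_vClass_subset hJ hTJ) ?_
  rw [card_image_of_injOn (injOn_vClass_of_mem_cross hJ),
    card_image_of_injOn (injOn_vClass_of_mem_cross hT), card_of_mem_cross hJ, card_of_mem_cross hT]

theorem image_vClass_eq_of_mem_cls (hF : F.IsFamily k a) (h2 : 2 ≤ j) (hk : j ≤ k - 1)
    (hS : S ∈ F.cross j) (hT : T ∈ F.cls j S) : T.image F.vClass = S.image F.vClass :=
  hF.image_vClass_eq hS (hF.cls_subset_cross h2 hk hS hT)
    (hF.subset_sup_vClass_of_mem_polyad (by omega) hk hS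
      ((mem_polyad (by omega)).2 ⟨S, by simp [card_of_mem_cross hS], hT⟩))

theorem image_vClass_eq_of_mem_polyCliques (hF : F.IsFamily k a) (h1 : 1 ≤ i) (hk : i ≤ k - 1)
    (hK : K ∈ F.cross (i + 1)) (hS : S ∈ F.polyCliques (i + 1) K) :
    S.image F.vClass = K.image F.vClass := by
  refine hF.image_vClass_eq hK (hF.polyCliques_subset_cross h1 hk hK hS) fun v hv => ?_
  have hmem : {v} ∈ S.powersetCard 1 := by simpa using hv
  exact mem_sup.2 (singleton_mem_polyad_one.1
    (hF.powersetCard_subset_polyad_of_mem_polyCliques hk hK hS le_rfl h1 hmem))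

theorem mem_cls_of_image_vClass_eq (hF : F.IsFamily k a) (h2 : 2 ≤ j) (hk : j ≤ k - 1)
    (hL : L ∈ F.cross m) (hT : T ∈ L.powersetCard j) (hS : S ∈ F.polyad j L)
    (hST : S.image F.vClass = T.image F.vClass) : S ∈ F.cls j T := by
  obtain ⟨S', hS', hSS'⟩ := (mem_polyad (by omega)).1 hS
  have hS'T : S'.image F.vClass = T.image F.vClass :=
    (hF.image_vClass_eq_of_mem_cls h2 hk (mem_cross_of_mem_powersetCard hL hS') hSS').symm.trans hST
  rwa [← (image_eq_image_iff_of_injOn (injOn_vClass_of_mem_cross hL) (mem_powersetCard.1 hS').1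
    (mem_powersetCard.1 hT).1).1 hS'T]

theorem filter_mem_cls (hF : F.IsFamily k a) (h2 : 2 ≤ j) (hk : j ≤ k - 1)
    (hL : L ∈ F.cross m) (hK : K ∈ F.cross i) (hLK : K.image F.vClass = L.image F.vClass)
    (hKp : K.powersetCard j ⊆ F.polyad j L) (hJ : J ∈ L.powersetCard j) :
    K.filter (F.vClass · ∈ J.image F.vClass) ∈ F.cls j J := by
  obtain ⟨hJL, hJj⟩ := mem_powersetCard.1 hJ
  have himg : (K.filter (F.vClass · ∈ J.image F.vClass)).image F.vClass = J.image F.vClass :=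
    image_filter_mem_eq (hLK ▸ image_subset_image hJL)
  refine hF.mem_cls_of_image_vClass_eq h2 hk hL hJ (hKp (mem_powersetCard.2
    ⟨filter_subset _ _, ?_⟩)) himg
  rw [← card_image_of_injOn
      ((injOn_vClass_of_mem_cross hK).mono (coe_subset.2 (filter_subset _ _))), himg,
    card_image_of_injOn ((injOn_vClass_of_mem_cross hL).mono (coe_subset.2 hJL)), hJj]

theorem exists_mem_cross_superset (hF : F.IsFamily k a) (hJ : J ∈ F.cross j) (hjk : j ≤ k) :
    ∃ K ∈ F.cross k, J ⊆ K := by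
  obtain ⟨hJg, rfl, hJinj⟩ := mem_cross.1 hJ
  obtain ⟨U, hJU, hUg, hUimg, hUinj⟩ :=
    hJinj.exists_subset_injOn_subset_range_eq (coe_subset.2 hJg)
  lift U to Finset V using F.gnd.finite_toSet.subset hUg
  have hUcard : U.card = a 1 := by
    rw [← hF.card_image_vClass, ← card_image_of_injOn hUinj]
    congr 1
    exact_mod_cast hUimg
  obtain ⟨K, hK, hJK⟩ := exists_mem_powersetCard_superset (coe_subset.1 hJU) hjk
    (hF.le_a_one.trans_eq hUcard.symm)
  obtain ⟨hKU, hKk⟩ := mem_powersetCard.1 hK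
  exact ⟨K, mem_cross.2 ⟨hKU.trans (coe_subset.1 hUg), hKk, hUinj.mono hKU⟩, hJK⟩

end IsFamily

end PartFam

namespace LabFam

variable {P : LabFam V} {k : ℕ} {a : ℕ → ℕ} {i j m : ℕ} {A B I L S T : Finset V} {x : Addr}

theorem mem_polyAt_one : T ∈ P.polyAt 1 x ↔ ∃ v, (v ∈ P.gnd ∧ P.vIdx v ∈ x.1) ∧ {v} = T := by
  simp [polyAt, sing]

theorem mem_polyAt (hj : 2 ≤ j) : T ∈ P.polyAt j x ↔ ∃ B ∈ x.1.powersetCard j,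
    T ∈ P.toPartFam.cross j ∧ P.addrOf (j - 1) T = restrictA x (j - 1) B ∧ P.lbl j T = x.2 B := by
  simp only [polyAt, if_neg (by omega : j ≠ 1), mem_sup, partAt, if_neg (by omega : ¬ j ≤ 1),
    mem_filter]

theorem polyAt_subset_cross (h1 : 1 ≤ j) : P.polyAt j x ⊆ P.toPartFam.cross j := by
  intro T hT
  rcases h1.eq_or_lt with rfl | h2
  · obtain ⟨v, ⟨hv, -⟩, rfl⟩ := mem_polyAt_one.1 hT
    exact PartFam.mem_cross.2 ⟨singleton_subset_iff.2 hv, card_singleton v, by simp⟩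
  · obtain ⟨B, -, hTc, -⟩ := (mem_polyAt h2).1 hT
    exact hTc

namespace IsLabeled

theorem isFamily (hP : P.IsLabeled k a) : P.toPartFam.IsFamily k a := hP.1

theorem vIdx_eq_iff (hP : P.IsLabeled k a) {u v : V} (hu : u ∈ P.gnd) (hv : v ∈ P.gnd) :
    P.vIdx u = P.vIdx v ↔ P.vClass u = P.vClass v := hP.2.2.1 u hu v hv

theorem lbl_eq (hP : P.IsLabeled k a) (h2 : 2 ≤ j) (hk : j ≤ k - 1)
    (hI : I ∈ P.toPartFam.cross j) (hT : T ∈ P.cls j I) : P.lbl j T = P.lbl j I :=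
  (hP.2.2.2 j h2 hk).2.1 I hI T hT

theorem injOn_vIdx (hP : P.IsLabeled k a) (hL : L ∈ P.toPartFam.cross m) :
    Set.InjOn P.vIdx L := fun _ hu _ hv huv =>
  PartFam.injOn_vClass_of_mem_cross hL hu hv ((hP.vIdx_eq_iff
    (PartFam.subset_gnd_of_mem_cross hL hu) (PartFam.subset_gnd_of_mem_cross hL hv)).1 huv)

theorem image_vIdx_subset_iff (hP : P.IsLabeled k a) (hA : A ⊆ P.gnd) (hB : B ⊆ P.gnd) :
    A.image P.vIdx ⊆ B.image P.vIdx ↔ A.image P.vClass ⊆ B.image P.vClass := by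
  simp only [image_subset_iff, mem_image]
  exact forall₂_congr fun u hu => exists_congr fun v => and_congr_right fun hv =>
    hP.vIdx_eq_iff (hB hv) (hA hu)

theorem image_vIdx_eq_iff (hP : P.IsLabeled k a) (hA : A ⊆ P.gnd) (hB : B ⊆ P.gnd) :
    A.image P.vIdx = B.image P.vIdx ↔ A.image P.vClass = B.image P.vClass := by
  simp only [subset_antisymm_iff, hP.image_vIdx_subset_iff hA hB, hP.image_vIdx_subset_iff hB hA]

theorem card_filter_vIdx (hP : P.IsLabeled k a) (hL : L ∈ P.toPartFam.cross m) {M : Finset ℕ}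
    (hM : M ⊆ L.image P.vIdx) : (L.filter (P.vIdx · ∈ M)).card = M.card := by
  rw [← card_image_of_injOn ((hP.injOn_vIdx hL).mono (coe_subset.2 (filter_subset _ _))),
    image_filter_mem_eq hM]

theorem addrOf_eq (hP : P.IsLabeled k a) (h2 : 2 ≤ j) (hk : j ≤ k - 1)
    (hI : I ∈ P.toPartFam.cross j) (hT : T ∈ P.cls j I) : P.addrOf i T = P.addrOf i I := by
  have hTc := hP.isFamily.cls_subset_cross h2 hk hI hT
  have hTg := PartFam.subset_gnd_of_mem_cross hTc
  have hIg := PartFam.subset_gnd_of_mem_cross hI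
  have himg : T.image P.vIdx = I.image P.vIdx :=
    (hP.image_vIdx_eq_iff hTg hIg).2 (hP.isFamily.image_vClass_eq_of_mem_cls h2 hk hI hT)
  have hTp : T ∈ P.polyad j I :=
    (PartFam.mem_polyad (by omega)).2 ⟨I, by simp [PartFam.card_of_mem_cross hI], hT⟩
  refine Prod.ext himg (funext fun M => ?_)
  simp only [addrOf, himg]
  refine if_ctx_congr Iff.rfl (fun hM => ?_) fun _ => rfl
  obtain ⟨hMI, hM2, -⟩ := hM
  have hMT : M ⊆ T.image P.vIdx := himg ▸ hMI
  have hMj : M.card ≤ j := by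
    rw [← PartFam.card_of_mem_cross hI, ← card_image_of_injOn (hP.injOn_vIdx hI)]
    exact card_le_card hMI
  have hIM : I.filter (P.vIdx · ∈ M) ∈ I.powersetCard M.card :=
    mem_powersetCard.2 ⟨filter_subset _ _, hP.card_filter_vIdx hI hMI⟩
  have hTM : T.filter (P.vIdx · ∈ M) ∈ P.polyad M.card I :=
    hP.isFamily.powersetCard_subset_polyad hk hI hTp (by omega) hMj
      (mem_powersetCard.2 ⟨filter_subset _ _, hP.card_filter_vIdx hTc hMT⟩)
  refine hP.lbl_eq hM2 (hMj.trans hk) (PartFam.mem_cross_of_mem_powersetCard hI hIM)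
    (hP.isFamily.mem_cls_of_image_vClass_eq hM2 (hMj.trans hk) hI hIM hTM ?_)
  rw [← hP.image_vIdx_eq_iff ((filter_subset _ _).trans hTg) ((filter_subset _ _).trans hIg),
    image_filter_mem_eq hMT, image_filter_mem_eq hMI]

theorem polyad_subset_polyAt (hP : P.IsLabeled k a) (h1 : 1 ≤ j) (hk : j ≤ k - 1)
    (hI : I ∈ P.toPartFam.cross m) (h : I.powersetCard j ⊆ P.polyAt j x) :
    P.polyad j I ⊆ P.polyAt j x := by
  intro T hT
  rcases h1.eq_or_lt with rfl | h2
  · obtain ⟨u, hu, v, hv, rfl⟩ := PartFam.mem_polyad_one.1 hT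
    have hug := PartFam.subset_gnd_of_mem_cross hI hu
    have hvg := hP.isFamily.vClass_subset hug hv
    have hu1 : {u} ∈ I.powersetCard 1 := by simpa using hu
    obtain ⟨w, hw, hwu⟩ := mem_polyAt_one.1 (h hu1)
    obtain rfl := singleton_injective hwu
    exact mem_polyAt_one.2
      ⟨v, ⟨hvg, (hP.vIdx_eq_iff hvg hug).2 (hP.isFamily.vClass_eq hug hv) ▸ hw.2⟩, rfl⟩
  · obtain ⟨S, hS, hTS⟩ := (PartFam.mem_polyad (by omega)).1 hT
    obtain ⟨B, hB, hSc, hSaddr, hSlbl⟩ := (mem_polyAt h2).1 (h hS)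
    exact (mem_polyAt h2).2 ⟨B, hB, hP.isFamily.cls_subset_cross h2 hk hSc hTS,
      (hP.addrOf_eq h2 hk hSc hTS).trans hSaddr, (hP.lbl_eq h2 hk hSc hTS).trans hSlbl⟩

end IsLabeled

end LabFam

/-! ### Counting cliques of polyads -/

namespace PartFam

variable {k l : ℕ} {a : ℕ → ℕ} {i m : ℕ} {S : Finset V}

/-- The polyad complex of the vertex set enumerated by `e`. At level `1` it is given by its vertex
classes only, the level-`1` graph playing no role in `Cx`. -/
def polyadCx (F : PartFam V) (e : Fin l → V) : Cx V l where
  C t := F.vClass (e t)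
  G j := F.polyad j (univ.image e)

variable {F : PartFam V} {e : Fin l → V}

theorem polyadCx_gnd : (F.polyadCx e).gnd = (univ.image e).sup F.vClass := by
  simp only [Cx.gnd, polyadCx, sup_image, Function.comp_def]

theorem apply_mem_gnd (hK : univ.image e ∈ F.cross m) (t : Fin l) : e t ∈ F.gnd :=
  subset_gnd_of_mem_cross hK (mem_image_of_mem e (mem_univ t))

theorem injective_of_image_mem_cross (hK : univ.image e ∈ F.cross l) : Function.Injective e := by
  have h : (univ.image e).card = (univ : Finset (Fin l)).card := by
    rw [card_of_mem_cross hK, card_fin]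
  simpa using card_image_iff.1 h

namespace IsFamily

theorem polyadCx_cross (hF : F.IsFamily k a) (hK : univ.image e ∈ F.cross m) :
    (F.polyadCx e).cross i = (F.cross i).filter (· ⊆ (F.polyadCx e).gnd) := by
  ext S
  simp only [Cx.cross, mem_filter, mem_powersetCard, mem_cross]
  have hgnd : (F.polyadCx e).gnd ⊆ F.gnd := by
    rw [polyadCx_gnd]
    exact hF.sup_vClass_subset_gnd hK
  have hinj : S ⊆ (F.polyadCx e).gnd →
      ((∀ t, (S ∩ F.vClass (e t)).card ≤ 1) ↔ Set.InjOn F.vClass S) := fun hS => by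
    simp only [card_le_one, mem_inter]
    constructor
    · intro h u hu v hv huv
      obtain ⟨t, -, hvt⟩ := mem_sup.1 (hS hv)
      refine h t u ⟨hu, ?_⟩ v ⟨hv, hvt⟩
      rw [hF.mem_vClass_iff (hgnd (hS hu)) (apply_mem_gnd hK t), huv]
      exact hF.vClass_eq (apply_mem_gnd hK t) hvt
    · intro h t u hu v hv
      exact h hu.1 hv.1 ((hF.vClass_eq (apply_mem_gnd hK t) hu.2).trans
        (hF.vClass_eq (apply_mem_gnd hK t) hv.2).symm)
  constructor
  · rintro ⟨⟨hS, hSi⟩, h⟩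
    exact ⟨⟨hS.trans hgnd, hSi, (hinj hS).1 h⟩, hS⟩
  · rintro ⟨⟨-, hSi, h⟩, hS⟩
    exact ⟨⟨hS, hSi⟩, (hinj hS).2 h⟩

theorem subset_of_mem_cls (hF : F.IsFamily k a) (h2 : 2 ≤ i) (hk : i ≤ k - 1) {J K T : Finset V}
    (hK : K ∈ F.cross m) (hJ : J ⊆ K) (hS : S ∈ K.powersetCard i) (hT : T ∈ F.cls i S)
    (hTJ : T ⊆ J.sup F.vClass) : S ⊆ J := by
  rw [← image_subset_image_iff_of_injOn (injOn_vClass_of_mem_cross hK) (mem_powersetCard.1 hS).1 hJ,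
    ← hF.image_vClass_eq_of_mem_cls h2 hk (mem_cross_of_mem_powersetCard hK hS) hT]
  exact hF.image_vClass_subset
    (mem_cross_of_mem_powersetCard hK (mem_powersetCard.2 ⟨hJ, rfl⟩)) hTJ

theorem polyadCx_restr (hF : F.IsFamily k a) (hK : univ.image e ∈ F.cross m) (h1 : 1 ≤ i)
    (hk : i ≤ k - 1) (L : Finset (Fin l)) : (F.polyadCx e).restr i L = F.polyad i (L.image e) := by
  have hLK : L.image e ⊆ univ.image e := image_subset_image (subset_univ _)
  have hLc := mem_cross_of_mem_powersetCard hK (mem_powersetCard.2 ⟨hLK, rfl⟩)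
  have hsup : L.sup (F.polyadCx e).C = (L.image e).sup F.vClass := by
    simp only [polyadCx, sup_image, Function.comp_def]
  rcases h1.eq_or_lt with rfl | h2
  · rw [Cx.restr, if_pos rfl, hsup, polyad_one]
  · rw [Cx.restr, if_neg (by omega), hsup]
    ext T
    rw [mem_filter]
    constructor
    · rintro ⟨hT, hTL⟩
      obtain ⟨S, hS, hTS⟩ := (mem_polyad (by omega)).1 hT
      exact (mem_polyad (by omega)).2 ⟨S, mem_powersetCard.2
        ⟨hF.subset_of_mem_cls h2 hk hK hLK hS hTS hTL, (mem_powersetCard.1 hS).2⟩, hTS⟩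
    · exact fun hT => ⟨polyad_mono hLK hT, hF.subset_sup_vClass_of_mem_polyad h1 hk hLc hT⟩

theorem polyadCx_isComplex (hF : F.IsFamily k a) (hK : univ.image e ∈ F.cross l) :
    (F.polyadCx e).IsComplex (k - 1) := by
  refine ⟨fun s t hst => ?_, fun j h2 hk T hT => ?_, fun j h3 hk T hT => ?_⟩
  · refine disjoint_left.2 fun v hvs hvt => hst (injective_of_image_mem_cross hK ?_)
    exact injOn_vClass_of_mem_cross hK (by simp) (by simp) <|
      (hF.vClass_eq (apply_mem_gnd hK s) hvs).symm.trans (hF.vClass_eq (apply_mem_gnd hK t) hvt)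
  · rw [hF.polyadCx_cross hK, mem_filter, polyadCx_gnd]
    exact ⟨hF.polyad_subset_cross hk (by omega) hK hT,
      hF.subset_sup_vClass_of_mem_polyad (by omega) hk hK hT⟩
  · rw [Kset, mem_filter, mem_powersetCard, polyadCx_gnd]
    exact ⟨⟨hF.subset_sup_vClass_of_mem_polyad (by omega) hk hK hT,
      card_of_mem_cross (hF.polyad_subset_cross hk (by omega) hK hT)⟩,
      hF.powersetCard_subset_polyad hk hK hT (by omega) (by omega)⟩

theorem polyadCx_isRegular (hF : F.IsFamily k a) {ε : ℝ} (hreg : F.PolyadReg k a ε)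
    {e : Fin k → V} (hK : univ.image e ∈ F.cross k) :
    (F.polyadCx e).IsRegular (k - 1) ε fun j => 1 / (a j : ℝ) := by
  intro j h2 hk L hL
  obtain ⟨i, rfl⟩ : ∃ i, j = i + 1 := ⟨j - 1, by omega⟩
  have hLK : L.image e ⊆ univ.image e := image_subset_image (subset_univ _)
  have hLm : L.image e ∈ (univ.image e).powersetCard (i + 1) := mem_powersetCard.2
    ⟨hLK, by rw [card_image_of_injective _ (injective_of_image_mem_cross hK),
      (mem_powersetCard.1 hL).2]⟩
  have hKset : ∀ R ⊆ F.polyad i (L.image e),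
      KsetC (F.polyadCx e).gnd ((F.polyadCx e).cross (i + 1)) i (i + 1) R =
        KsetC F.gnd (F.cross (i + 1)) i (i + 1) R := fun R hR => by
    rw [hF.polyadCx_cross hK]
    rw [polyadCx_gnd]
    exact KsetC_restrict (by omega) (by omega) (hF.sup_vClass_subset_gnd hK) (filter_subset _ _)
      fun T hT => hF.subset_sup_vClass_of_mem_polyad (by omega) (by omega) hK
        (polyad_mono hLK (hR hT))
  intro R hR
  rw [hF.polyadCx_restr hK (by omega) (by omega), Nat.add_sub_cancel] at hR ⊢
  rw [hKset R hR, hKset _ Subset.rfl]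
  exact hreg _ hK (i + 1) h2 hk _ hLm R hR

end IsFamily

end PartFam

theorem card_mul_card_le_of_pair_mem {A B : Finset V} (hAB : Disjoint A B)
    {C : Finset (Finset V)} (h : ∀ u ∈ A, ∀ v ∈ B, {u, v} ∈ C) : A.card * B.card ≤ C.card := by
  rw [← card_product]
  refine card_le_card_of_injOn (fun p => {p.1, p.2}) (fun p hp => ?_) fun p hp q hq hpq => ?_
  · obtain ⟨hu, hv⟩ := mem_product.1 hp
    exact h _ hu _ hv
  · obtain ⟨hpA, -⟩ := mem_product.1 hp
    obtain ⟨-, hqB⟩ := mem_product.1 hq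
    have hpq' : ({p.1, p.2} : Set V) = {q.1, q.2} := by simpa using congrArg ((↑) : _ → Set V) hpq
    rcases Set.pair_eq_pair_iff.1 hpq' with ⟨h1, h2⟩ | ⟨h1, -⟩
    · exact Prod.ext h1 h2
    · exact absurd (h1 ▸ hpA) (disjoint_right.1 hAB hqB)

/-- The constant `c` in the lower bound `c * n ^ k` that the counting lemma gives for the number of
cliques of a polyad: all relative densities are at least `1 / t`, all vertex classes have size at
least `n / (2 * t)`, and half of the expected number is lost to the error term. -/
noncomputable def cliqueConst (k t : ℕ) : ℝ :=
  1 / 2 * (∏ j ∈ Icc 2 (k - 1), (1 / (t : ℝ)) ^ k.choose j) * (1 / (2 * t)) ^ k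

theorem cliqueConst_anti {k t T : ℕ} (ht : 1 ≤ t) (htT : t ≤ T) :
    cliqueConst k T ≤ cliqueConst k t := by
  have : (0 : ℝ) < t := by exact_mod_cast ht
  unfold cliqueConst
  gcongr

theorem cliqueConst_pos (k : ℕ) {t : ℕ} (ht : 1 ≤ t) : 0 < cliqueConst k t := by
  have : (0 : ℝ) < t := by exact_mod_cast ht
  exact mul_pos (mul_pos one_half_pos (prod_pos fun _ _ => by positivity)) (by positivity)

namespace PartFam

variable {F : PartFam V} {k : ℕ} {a : ℕ → ℕ} {i j t : ℕ} {J K : Finset V} {c : ℝ}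

theorem exists_image_univ_eq (hK : K ∈ F.cross k) : ∃ e : Fin k → V, univ.image e = K := by
  let f := K.equivFinOfCardEq (card_of_mem_cross hK)
  refine ⟨fun t => f.symm t, ?_⟩
  ext v
  simp only [mem_image, mem_univ, true_and]
  exact ⟨fun ⟨t, ht⟩ => ht ▸ (f.symm t).2, fun hv => ⟨f ⟨v, hv⟩, by simp⟩⟩

namespace IsFamily

theorem prod_card_vClass_le_card_polyCliques_two (hF : F.IsFamily k a) (hK : K ∈ F.cross 2) :
    ∏ v ∈ K, (F.vClass v).card ≤ (F.polyCliques 2 K).card := by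
  obtain ⟨hKg, hK2, hKinj⟩ := mem_cross.1 hK
  obtain ⟨x, y, hxy, rfl⟩ := card_eq_two.1 hK2
  have hx : x ∈ F.gnd := hKg (by simp)
  have hy : y ∈ F.gnd := hKg (by simp)
  have hne : F.vClass x ≠ F.vClass y := fun h => hxy (hKinj (by simp) (by simp) h)
  rw [prod_pair hxy]
  refine card_mul_card_le_of_pair_mem (disjoint_left.2 fun v hvx hvy =>
    hne ((hF.vClass_eq hx hvx).symm.trans (hF.vClass_eq hy hvy))) fun u hu v hv => ?_
  have huv : F.vClass u ≠ F.vClass v := by rwa [hF.vClass_eq hx hu, hF.vClass_eq hy hv]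
  refine mem_polyCliques.2 ⟨mem_cross.2 ⟨?_, card_pair (ne_of_apply_ne _ huv), ?_⟩, ?_⟩
  · exact insert_subset (hF.vClass_subset hx hu)
      (singleton_subset_iff.2 (hF.vClass_subset hy hv))
  · rw [coe_pair]
    exact Set.injOn_pair.2 fun h => absurd h huv
  · simp only [powersetCard_one, forall_mem_map, Function.Embedding.coeFn_mk, forall_mem_insert,
      mem_singleton, forall_eq, singleton_mem_polyad_one]
    exact ⟨⟨x, by simp, hu⟩, ⟨y, by simp, hv⟩⟩

theorem half_mul_prod_le_card_polyCliques {V : Type} [DecidableEq V] {F : PartFam V}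
    {K : Finset V} (hF : F.IsFamily k a) (h3 : 3 ≤ k) {ε : ℝ}
    (hreg : F.PolyadReg k a ε) {eCL : ℝ → ℝ → ℕ → ℕ → ℝ} {mCL : ℝ → ℝ → ℕ → ℕ → ℕ}
    (hCL : CountingProp eCL mCL) (ht : 2 ≤ t) (ha : ∀ j, 1 ≤ j → j ≤ k - 1 → 1 ≤ a j ∧ a j ≤ t)
    (hε : 0 < ε) (hεt : ε ≤ eCL (1 / t) (1 / t) (k - 1) k) {m : ℕ}
    (hm : mCL (1 / t) (1 / t) (k - 1) k ≤ m) {lam : ℝ} (hlam : 0 ≤ lam) (hlam' : lam < 1 / 4)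
    (hcl : ∀ v ∈ F.gnd, |((F.vClass v).card : ℝ) - m| ≤ lam * m) (hK : K ∈ F.cross k) :
    1 / 2 * ((∏ j ∈ Icc 2 (k - 1), (1 / (a j : ℝ)) ^ k.choose j) *
      ∏ v ∈ K, ((F.vClass v).card : ℝ)) ≤ (F.polyCliques k K).card := by
  obtain ⟨e, rfl⟩ := exists_image_univ_eq hK
  have : (0 : ℝ) < t := by positivity
  have hcount := (hCL (1 / t) (1 / t) (by positivity) (by positivity) (k - 1) k (by omega)
    (by omega)).2 V (F.polyadCx e) m lam ε (fun j => 1 / (a j : ℝ)) hlam hlam' hε hεt hm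
    (fun j hj hjk => one_div_le_one_div_of_le (by exact_mod_cast (ha j (by omega) hjk).1)
      (by exact_mod_cast (ha j (by omega) hjk).2))
    (hF.polyadCx_isComplex hK) (fun s => hcl _ (apply_mem_gnd hK s))
    (hF.polyadCx_isRegular hreg hK)
  have hsub : Kset (F.polyadCx e).gnd (k - 1) k ((F.polyadCx e).G (k - 1)) ⊆
      F.polyCliques k (univ.image e) := by
    rw [polyadCx_gnd, polyCliques, KsetC, if_neg (by omega)]
    exact filter_subset_filter _ (powersetCard_mono (hF.sup_vClass_subset_gnd hK))
  have hprod : ∏ s, (((F.polyadCx e).C s).card : ℝ) =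
      ∏ v ∈ univ.image e, ((F.vClass v).card : ℝ) :=
    (prod_image (f := fun v => ((F.vClass v).card : ℝ))
      (injective_of_image_mem_cross hK).injOn).symm
  rw [hprod] at hcount
  have hsub' := Nat.cast_le (α := ℝ).2 (card_le_card hsub)
  have ht2 : 1 / (t : ℝ) ≤ 1 / 2 := one_div_le_one_div_of_le two_pos (by exact_mod_cast ht)
  have hexp : 0 ≤ (∏ j ∈ Icc 2 (k - 1), (1 / (a j : ℝ)) ^ k.choose j) *
      ∏ v ∈ univ.image e, ((F.vClass v).card : ℝ) :=
    mul_nonneg (prod_nonneg fun _ _ => by positivity) (prod_nonneg fun _ _ => by positivity)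
  linarith [(abs_le.1 hcount).1, mul_le_mul_of_nonneg_right ht2 hexp]

end IsFamily

theorem cliqueConst_mul_pow_le (ht : 1 ≤ t) (ha : ∀ j, 1 ≤ j → j ≤ k - 1 → 1 ≤ a j ∧ a j ≤ t)
    (hsize : ∀ v ∈ F.gnd, (F.gnd.card : ℝ) / (2 * t) ≤ (F.vClass v).card) (hK : K ∈ F.cross k) :
    cliqueConst k t * (F.gnd.card : ℝ) ^ k ≤
      1 / 2 * ((∏ j ∈ Icc 2 (k - 1), (1 / (a j : ℝ)) ^ k.choose j) *
        ∏ v ∈ K, ((F.vClass v).card : ℝ)) := by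
  have : (0 : ℝ) < t := by exact_mod_cast ht
  have hdens : ∏ j ∈ Icc 2 (k - 1), (1 / (t : ℝ)) ^ k.choose j ≤
      ∏ j ∈ Icc 2 (k - 1), (1 / (a j : ℝ)) ^ k.choose j := by
    refine prod_le_prod (fun _ _ => by positivity) fun j hj => ?_
    obtain ⟨hj2, hjk⟩ := mem_Icc.1 hj
    obtain ⟨h1, h2⟩ := ha j (by omega) hjk
    have : (0 : ℝ) < a j := by exact_mod_cast h1
    gcongr
  have hclass : ((F.gnd.card : ℝ) / (2 * t)) ^ k ≤ ∏ v ∈ K, ((F.vClass v).card : ℝ) := by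
    rw [← card_of_mem_cross hK, ← prod_const]
    exact prod_le_prod (fun _ _ => by positivity) fun v hv =>
      hsize v (subset_gnd_of_mem_cross hK hv)
  calc cliqueConst k t * (F.gnd.card : ℝ) ^ k
      = 1 / 2 * ((∏ j ∈ Icc 2 (k - 1), (1 / (t : ℝ)) ^ k.choose j) *
          ((F.gnd.card : ℝ) / (2 * t)) ^ k) := by
        rw [cliqueConst, ← one_div_mul_eq_div (2 * (t : ℝ)), mul_pow]
        ring
    _ ≤ _ := by gcongr

namespace IsFamily

theorem cliqueConst_mul_pow_le_card_polyCliques {V : Type} [DecidableEq V] {F : PartFam V}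
    {K : Finset V} (hF : F.IsFamily k a) (h2k : 2 ≤ k) {ε : ℝ}
    (hreg : F.PolyadReg k a ε) {eCL : ℝ → ℝ → ℕ → ℕ → ℝ} {mCL : ℝ → ℝ → ℕ → ℕ → ℕ}
    (hCL : CountingProp eCL mCL) (ht : 2 ≤ t) (ha : ∀ j, 1 ≤ j → j ≤ k - 1 → 1 ≤ a j ∧ a j ≤ t)
    (hε : 0 < ε) (hεt : 3 ≤ k → ε ≤ eCL (1 / t) (1 / t) (k - 1) k) {m : ℕ}
    (hm : mCL (1 / t) (1 / t) (k - 1) k ≤ m) {lam : ℝ} (hlam : 0 ≤ lam) (hlam' : lam < 1 / 4)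
    (hcl : ∀ v ∈ F.gnd, |((F.vClass v).card : ℝ) - m| ≤ lam * m)
    (hsize : ∀ v ∈ F.gnd, (F.gnd.card : ℝ) / (2 * t) ≤ (F.vClass v).card)
    (hK : K ∈ F.cross k) :
    cliqueConst k t * (F.gnd.card : ℝ) ^ k ≤ (F.polyCliques k K).card := by
  refine (cliqueConst_mul_pow_le (by omega) ha hsize hK).trans ?_
  rcases h2k.eq_or_lt with rfl | h3
  · have hpair : ∏ v ∈ K, ((F.vClass v).card : ℝ) ≤ (F.polyCliques 2 K).card := by
      exact_mod_cast hF.prod_card_vClass_le_card_polyCliques_two hK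
    have : 0 ≤ ∏ v ∈ K, ((F.vClass v).card : ℝ) := prod_nonneg fun _ _ => by positivity
    simp only [Nat.add_one_sub_one, Icc_eq_empty_of_lt one_lt_two, prod_empty, one_mul]
    linarith
  · exact hF.half_mul_prod_le_card_polyCliques h3 hreg hCL ht ha hε (hεt h3) hm hlam hlam' hcl hK

theorem card_polyCliques_le (hF : F.IsFamily k a) (h2 : 2 ≤ j) (hj : j ≤ i) (hk : i ≤ k - 1)
    (hK : K ∈ F.cross (i + 1)) (hJ : J ∈ K.powersetCard j) :
    (F.polyCliques (i + 1) K).card ≤ (F.cls j J).card * F.gnd.card ^ (i + 1 - j) := by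
  let p : V → Prop := fun v => F.vClass v ∈ J.image F.vClass
  calc (F.polyCliques (i + 1) K).card
      ≤ (F.cls j J ×ˢ F.gnd.powersetCard (i + 1 - j)).card := by
        refine card_le_card_of_injOn (fun S => (S.filter p, S.filter (¬ p ·)))
          (fun S hS => ?_) fun S _ S' _ h => ?_
        · have hSc := hF.polyCliques_subset_cross (by omega) hk hK hS
          have hcls : S.filter p ∈ F.cls j J := hF.filter_mem_cls h2 (by omega) hK hSc
            (hF.image_vClass_eq_of_mem_polyCliques (by omega) hk hK hS)
            (hF.powersetCard_subset_polyad_of_mem_polyCliques hk hK hS (by omega) hj) hJ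
          refine mem_product.2 ⟨hcls, mem_powersetCard.2
            ⟨(filter_subset _ _).trans (subset_gnd_of_mem_cross hSc), ?_⟩⟩
          have hadd := card_filter_add_card_filter_not (s := S) p
          rw [card_of_mem_cross hSc, card_of_mem_cross (hF.cls_subset_cross h2 (by omega)
            (mem_cross_of_mem_powersetCard hK hJ) hcls)] at hadd
          exact Nat.eq_sub_of_add_eq' hadd
        · obtain ⟨hp, hnp⟩ := Prod.ext_iff.1 h
          rw [← filter_union_filter_not_eq p S, ← filter_union_filter_not_eq p S']
          exact congrArg₂ _ hp hnp
    _ ≤ (F.cls j J).card * F.gnd.card ^ (i + 1 - j) := by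
        rw [card_product, card_powersetCard]
        exact Nat.mul_le_mul_left _ (Nat.choose_le_pow _ _)

theorem mul_pow_le_card_cls (hF : F.IsFamily k a)
    (hc : ∀ K ∈ F.cross k, c * (F.gnd.card : ℝ) ^ k ≤ (F.polyCliques k K).card)
    (h2 : 2 ≤ j) (hjk : j ≤ k - 1) (hJ : J ∈ F.cross j) :
    c * (F.gnd.card : ℝ) ^ j ≤ (F.cls j J).card := by
  obtain ⟨i, rfl⟩ : ∃ i, k = i + 1 := ⟨k - 1, by omega⟩
  obtain ⟨K, hK, hJK⟩ := hF.exists_mem_cross_superset hJ (by omega)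
  have hle := hF.card_polyCliques_le h2 (by omega) (by omega) hK
    (mem_powersetCard.2 ⟨hJK, card_of_mem_cross hJ⟩)
  have hgnd : 0 < (F.gnd.card : ℝ) ^ (i + 1 - j) := by
    obtain ⟨v, hv⟩ := card_pos.1 ((card_of_mem_cross hJ).symm ▸ (by omega : 0 < j))
    have : 0 < F.gnd.card := card_pos.2 ⟨v, subset_gnd_of_mem_cross hJ hv⟩
    positivity
  refine le_of_mul_le_mul_right ?_ hgnd
  calc c * (F.gnd.card : ℝ) ^ j * (F.gnd.card : ℝ) ^ (i + 1 - j)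
      = c * (F.gnd.card : ℝ) ^ (i + 1) := by
        rw [mul_assoc, ← pow_add, Nat.add_sub_cancel' (by omega)]
    _ ≤ (F.polyCliques (i + 1) K).card := hc K hK
    _ ≤ (F.cls j J).card * (F.gnd.card : ℝ) ^ (i + 1 - j) := by exact_mod_cast hle

theorem mul_pow_le_card_polyCliques (hF : F.IsFamily k a)
    (hc : ∀ K ∈ F.cross k, c * (F.gnd.card : ℝ) ^ k ≤ (F.polyCliques k K).card)
    (h2 : 2 ≤ j) (hjk : j ≤ k - 1) (hJ : J ∈ F.cross j) :
    c * (F.gnd.card : ℝ) ^ j ≤ (F.polyCliques j J).card :=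
  (hF.mul_pow_le_card_cls hc h2 hjk hJ).trans
    (by exact_mod_cast card_le_card (hF.cls_subset_polyCliques h2 hjk hJ))

end IsFamily

end PartFam

/-! ### Pulling hypergraphs back along a map that moves few vertices -/

section Pull

variable {W : Finset V} {φ : V → V} {i j : ℕ} {B cr R : Finset (Finset V)} {e T : Finset V}

/-- The pullback of a hypergraph along `φ`: the `j`-subsets of `W` whose image under `φ` is an edge
of `B`. -/
noncomputable def pull (W : Finset V) (φ : V → V) (j : ℕ) (B : Finset (Finset V)) :
    Finset (Finset V) :=
  (W.powersetCard j).filter (·.image φ ∈ B)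

/-- The `j`-subsets of `W` containing a vertex that is not fixed by `φ`. -/
noncomputable def moved (W : Finset V) (φ : V → V) (j : ℕ) : Finset (Finset V) :=
  (W.powersetCard j).filter fun e => ∃ v ∈ e, φ v ≠ v

theorem mem_pull : e ∈ pull W φ j B ↔ e ∈ W.powersetCard j ∧ e.image φ ∈ B := mem_filter

theorem pull_subset_powersetCard : pull W φ j B ⊆ W.powersetCard j := filter_subset _ _

theorem image_eq_self (h : ∀ v ∈ e, φ v = v) : e.image φ = e := by
  rw [image_congr h, image_id']

theorem mem_powersetCard_sdiff_moved :
    e ∈ W.powersetCard j \ moved W φ j ↔ e ∈ W.powersetCard j ∧ ∀ v ∈ e, φ v = v := by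
  simp +contextual [moved]

theorem mem_pull_iff (he : e ∈ W.powersetCard j \ moved W φ j) : e ∈ pull W φ j B ↔ e ∈ B := by
  obtain ⟨he, hφe⟩ := mem_powersetCard_sdiff_moved.1 he
  rw [mem_pull, image_eq_self hφe, and_iff_right he]

theorem mem_powersetCard_image (he : Set.InjOn φ e) :
    T ∈ (e.image φ).powersetCard j ↔ ∃ S ∈ e.powersetCard j, S.image φ = T := by
  simp only [mem_powersetCard]
  constructor
  · rintro ⟨hT, rfl⟩
    obtain ⟨S, hS, rfl⟩ := subset_image_iff.1 hT
    exact ⟨S, ⟨hS, (card_image_of_injOn (he.mono hS)).symm⟩, rfl⟩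
  · rintro ⟨S, ⟨hS, rfl⟩, rfl⟩
    exact ⟨image_subset_image hS, card_image_of_injOn (he.mono hS)⟩

theorem injOn_of_mem_pull (hB : ∀ T ∈ B, T.card = j) (he : e ∈ pull W φ j B) :
    Set.InjOn φ e := by
  obtain ⟨he, heB⟩ := mem_pull.1 he
  exact card_image_iff.1 ((hB _ heB).trans (mem_powersetCard.1 he).2.symm)

theorem powersetCard_subset_pull_iff (heW : e ⊆ W) (he : Set.InjOn φ e) :
    (∀ T ∈ e.powersetCard i, T ∈ pull W φ i B) ↔ ∀ T ∈ (e.image φ).powersetCard i, T ∈ B := by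
  simp only [mem_powersetCard_image he, forall_exists_index, and_imp, forall_apply_eq_imp_iff₂,
    mem_pull]
  exact forall₂_congr fun T hT => and_iff_right (powersetCard_mono heW hT)

theorem KsetC_pull (hφ : Set.MapsTo φ W W) (hi : 1 ≤ i) (hcr : cr ⊆ W.powersetCard (i + 1))
    (hB : ∀ T ∈ B, T.card = i) :
    KsetC W (pull W φ (i + 1) cr) i (i + 1) (pull W φ i B) =
      pull W φ (i + 1) (KsetC W cr i (i + 1) B) := by
  ext e
  by_cases heW : e ∈ W.powersetCard (i + 1)
  swap
  · exact iff_of_false (fun h => heW (KsetC_subset_powersetCard pull_subset_powersetCard h))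
      fun h => heW (pull_subset_powersetCard h)
  obtain ⟨heW', hei⟩ := mem_powersetCard.1 heW
  by_cases hinj : Set.InjOn φ e
  · have himg : e.image φ ∈ W.powersetCard (i + 1) := mem_powersetCard.2
      ⟨image_subset_iff.2 fun v hv => hφ (heW' hv), (card_image_of_injOn hinj).trans hei⟩
    rw [mem_pull, mem_KsetC, mem_KsetC, powersetCard_subset_pull_iff heW' hinj]
    split_ifs <;> simp only [mem_pull, heW, himg, true_and]
  · refine iff_of_false (fun h => hinj ?_) fun h => hinj (injOn_of_mem_pull
      (fun T hT => (mem_powersetCard.1 (KsetC_subset_powersetCard hcr hT)).2) h)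
    obtain ⟨he, heB⟩ := mem_KsetC.1 h
    split_ifs at he with h1
    · exact injOn_of_mem_pull (fun T hT => (mem_powersetCard.1 (hcr hT)).2) he
    · intro u hu v hv huv
      obtain ⟨T, hT, huvT⟩ := exists_mem_powersetCard_superset (i := i)
        (insert_subset hu (singleton_subset_iff.2 hv)) (card_le_two.trans (by omega)) (by omega)
      exact injOn_of_mem_pull hB (heB T hT) (huvT (by simp)) (huvT (by simp)) huv

theorem KsetC_pull_sdiff_moved (hi : 1 ≤ i) (hcr : cr ⊆ W.powersetCard (i + 1)) :
    KsetC W (pull W φ (i + 1) cr) i (i + 1) R \ moved W φ (i + 1) =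
      KsetC W cr i (i + 1) (R.filter fun T => ∀ v ∈ T, φ v = v) := by
  ext e
  by_cases he : e ∈ W.powersetCard (i + 1) \ moved W φ (i + 1)
  · have hfix : ∀ T ∈ e.powersetCard i, ∀ v ∈ T, φ v = v := fun T hT v hv =>
      (mem_powersetCard_sdiff_moved.1 he).2 v ((mem_powersetCard.1 hT).1 hv)
    rw [mem_sdiff, and_iff_left (mem_sdiff.1 he).2, mem_KsetC, mem_KsetC]
    refine and_congr ?_ (forall₂_congr fun T hT => ?_)
    · split_ifs
      exacts [mem_pull_iff he, Iff.rfl]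
    · rw [mem_filter, and_iff_left (hfix T hT)]
  · refine iff_of_false (fun h => he (mem_sdiff.2 ⟨KsetC_subset_powersetCard
      pull_subset_powersetCard (mem_sdiff.1 h).1, (mem_sdiff.1 h).2⟩)) fun h => he ?_
    have heW := KsetC_subset_powersetCard hcr h
    refine mem_powersetCard_sdiff_moved.2 ⟨heW, fun v hv => ?_⟩
    obtain ⟨T, hT, hvT⟩ := exists_mem_powersetCard_superset (i := i) (singleton_subset_iff.2 hv)
      (by simpa using hi) (by rw [(mem_powersetCard.1 heW).2]; exact i.le_succ)
    exact (mem_filter.1 ((mem_KsetC.1 h).2 T hT)).2 v (hvT (mem_singleton_self v))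

theorem card_moved_le : (moved W φ (j + 1)).card ≤
    (W.filter fun v => φ v ≠ v).card * W.card ^ j := by
  have hsub : moved W φ (j + 1) ⊆
      ((W.filter fun v => φ v ≠ v) ×ˢ W.powersetCard j).image fun p => insert p.1 p.2 := by
    intro e he
    obtain ⟨heW, v, hv, hne⟩ := mem_filter.1 he
    obtain ⟨heW, hej⟩ := mem_powersetCard.1 heW
    refine mem_image.2 ⟨(v, e.erase v), mem_product.2 ⟨mem_filter.2 ⟨heW hv, hne⟩,
      mem_powersetCard.2 ⟨(erase_subset _ _).trans heW, ?_⟩⟩, insert_erase hv⟩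
    rw [card_erase_of_mem hv, hej, Nat.add_sub_cancel]
  refine (card_le_card hsub).trans (card_image_le.trans ?_)
  rw [card_product, card_powersetCard]
  exact Nat.mul_le_mul_left _ (Nat.choose_le_pow _ _)

theorem three_mul_card_moved_le {ν κ c N : ℝ}
    (hν : ((W.filter fun v => φ v ≠ v).card : ℝ) ≤ ν * W.card) (hκ : 0 ≤ κ)
    (hνc : 3 * ν ≤ κ * c) (hN : c * (W.card : ℝ) ^ (j + 1) ≤ N) :
    3 * ((moved W φ (j + 1)).card : ℝ) ≤ κ * N :=
  calc 3 * ((moved W φ (j + 1)).card : ℝ)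
      ≤ 3 * ((W.filter fun v => φ v ≠ v).card * (W.card : ℝ) ^ j) := by
        gcongr
        exact_mod_cast card_moved_le
    _ ≤ 3 * (ν * W.card * (W.card : ℝ) ^ j) := by gcongr
    _ = 3 * ν * (W.card : ℝ) ^ (j + 1) := by ring
    _ ≤ κ * c * (W.card : ℝ) ^ (j + 1) := by gcongr
    _ = κ * (c * (W.card : ℝ) ^ (j + 1)) := mul_assoc _ _ _
    _ ≤ κ * N := by gcongr

theorem card_le_card_pull_add_card_moved (hB : B ⊆ W.powersetCard j) :
    B.card ≤ (pull W φ j B).card + (moved W φ j).card := by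
  refine (card_le_card fun e he => ?_).trans (card_union_le _ _)
  by_cases hem : e ∈ moved W φ j
  · exact mem_union_right _ hem
  · exact mem_union_left _ ((mem_pull_iff (mem_sdiff.2 ⟨hB he, hem⟩)).2 he)

theorem abs_sub_mul_le_of_perturb {r s x y d ε δ : ℝ} (hε : 0 ≤ ε) (hd : 0 ≤ d) (hd1 : d ≤ 1)
    (hx : 0 ≤ x) (hxy : x ≤ y) (hy : y ≤ δ * (r + y)) (h : |s - d * r| ≤ ε * r) :
    |s + x - d * (r + y)| ≤ (ε + δ) * (r + y) := by
  have hxd : |x - d * y| ≤ y := abs_sub_le_iff.2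
    ⟨by nlinarith, by nlinarith⟩
  calc |s + x - d * (r + y)| = |(s - d * r) + (x - d * y)| := by ring_nf
    _ ≤ ε * r + y := (abs_add_le _ _).trans (add_le_add h hxd)
    _ ≤ (ε + δ) * (r + y) := by nlinarith [mul_nonneg hε (hx.trans hxy)]

theorem mul_le_and_le_mul_of_perturb {p r y b μ ε δ : ℝ} (hε : 0 < ε) (hε1 : ε ≤ 1) (hδ : 0 < δ)
    (hδ1 : δ ≤ 1) (hy : 0 ≤ y) (hyμ : y ≤ μ) (hb : 0 ≤ b) (hbp : b ≤ p + μ)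
    (hμ : 3 * μ ≤ δ * ε * b) (h : (ε + δ) * p ≤ r + y) : ε * b ≤ r ∧ y ≤ δ * (r + y) := by
  have hδb : δ * ε * b ≤ δ * b := by
    gcongr
    exact mul_le_of_le_one_right hδ.le hε1
  have hr : ε * b ≤ r := by
    have hbp' := mul_le_mul_of_nonneg_left hbp (add_pos hε hδ).le
    have hμ2 : (ε + δ) * μ ≤ 2 * μ := mul_le_mul_of_nonneg_right (by linarith) (hy.trans hyμ)
    linarith
  refine ⟨hr, ?_⟩
  calc y ≤ δ * (ε * b) := by linarith
    _ ≤ δ * (r + y) := by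
      gcongr
      exact hr.trans (le_add_of_nonneg_right hy)

theorem filter_fixed_subset (hR : R ⊆ pull W φ i B) : (R.filter fun T => ∀ v ∈ T, φ v = v) ⊆ B := by
  intro T hT
  obtain ⟨hTR, hTφ⟩ := mem_filter.1 hT
  simpa only [image_eq_self hTφ] using (mem_pull.1 (hR hTR)).2

theorem inter_sdiff_moved_eq {A A' K : Finset (Finset V)} (hK : K ⊆ W.powersetCard j)
    (hA : ∀ e ∈ W.powersetCard j \ moved W φ j, e ∈ A' ↔ e ∈ A) :
    (A' ∩ K) \ moved W φ j = A ∩ (K \ moved W φ j) := by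
  rw [inter_sdiff_assoc]
  ext e
  simp only [mem_inter]
  exact and_congr_left fun he => hA e (sdiff_subset_sdiff hK Subset.rfl he)

theorem RegPairC.pull {A A' : Finset (Finset V)} (hφ : Set.MapsTo φ W W) (hi : 1 ≤ i)
    (hcr : cr ⊆ W.powersetCard (i + 1)) (hB : ∀ T ∈ B, T.card = i)
    (hA : ∀ e ∈ W.powersetCard (i + 1) \ moved W φ (i + 1), e ∈ A' ↔ e ∈ A)
    {ε δ d : ℝ} (hε : 0 < ε) (hε1 : ε ≤ 1) (hδ : 0 < δ) (hδ1 : δ ≤ 1) (hd : 0 ≤ d) (hd1 : d ≤ 1)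
    (hmoved : KsetC W cr i (i + 1) B = ∅ ∨
      3 * ((moved W φ (i + 1)).card : ℝ) ≤ δ * ε * (KsetC W cr i (i + 1) B).card)
    (h : RegPairC W cr i ε d A B) :
    RegPairC W (pull W φ (i + 1) cr) i (ε + δ) d A' (pull W φ i B) := by
  intro R hR hlarge
  rw [KsetC_pull hφ hi hcr hB] at hlarge
  set KB := KsetC W cr i (i + 1) B
  set KR := KsetC W (HypReg.pull W φ (i + 1) cr) i (i + 1) R
  set M := moved W φ (i + 1)
  have hKRW : KR ⊆ W.powersetCard (i + 1) := KsetC_subset_powersetCard pull_subset_powersetCard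
  rcases hmoved with hKB | hmoved
  · have hKRB : KR ⊆ HypReg.pull W φ (i + 1) KB := by
      rw [← KsetC_pull hφ hi hcr hB]
      exact fun e he => mem_KsetC.2 ((mem_KsetC.1 he).imp_right fun h T hT => hR (h T hT))
    have hKR0 : KR = ∅ := by simpa [HypReg.pull, hKB] using hKRB
    simp [hKR0]
  have hsplit (s : Finset (Finset V)) : (s.card : ℝ) = (s \ M).card + (s ∩ M).card := by
    exact_mod_cast (card_sdiff_add_card_inter s M).symm
  have hKRM : ((KR ∩ M).card : ℝ) ≤ M.card := by exact_mod_cast card_le_card inter_subset_right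
  have hKBM : (KB.card : ℝ) ≤ (HypReg.pull W φ (i + 1) KB).card + M.card := by
    exact_mod_cast card_le_card_pull_add_card_moved (KsetC_subset_powersetCard hcr)
  rw [hsplit KR] at hlarge
  obtain ⟨hlarge₀, hfew⟩ := mul_le_and_le_mul_of_perturb hε hε1 hδ hδ1 (Nat.cast_nonneg _) hKRM
    (Nat.cast_nonneg _) hKBM hmoved hlarge
  -- The cliques of `R` avoiding moved vertices are the cliques of the unmoved edges of `R`, to
  -- which the regularity of `B` applies.
  have hfixed : KR \ M = KsetC W cr i (i + 1) (R.filter fun T => ∀ v ∈ T, φ v = v) :=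
    KsetC_pull_sdiff_moved hi hcr
  rw [hsplit KR, hsplit (A' ∩ KR), inter_sdiff_moved_eq hKRW hA]
  refine abs_sub_mul_le_of_perturb hε.le hd hd1 (Nat.cast_nonneg _) ?_ hfew ?_
  · exact_mod_cast card_le_card (inter_subset_inter_right inter_subset_right)
  · rw [hfixed] at hlarge₀ ⊢
    exact h _ (filter_fixed_subset hR) hlarge₀

end Pull

/-! ### Pulling labelled families of partitions back -/

theorem card_image_eq_card_image {α β γ δ : Type*} [DecidableEq γ] [DecidableEq δ] {s : Finset α}
    {t : Finset β} {f : α → γ} {g : β → δ} (ψ : α → β) (hψ : ∀ x ∈ s, ψ x ∈ t)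
    (hfg : ∀ x ∈ s, ∀ y ∈ s, f x = f y ↔ g (ψ x) = g (ψ y))
    (hsurj : ∀ b ∈ t, ∃ x ∈ s, g (ψ x) = g b) : (s.image f).card = (t.image g).card := by
  have hst : s.image (g ∘ ψ) = t.image g := by
    ext c
    simp only [mem_image, Function.comp]
    constructor
    · rintro ⟨x, hx, rfl⟩
      exact ⟨ψ x, hψ x hx, rfl⟩
    · rintro ⟨b, hb, rfl⟩
      exact hsurj b hb
  have hf : ((s.image fun x => (f x, g (ψ x))).image Prod.fst).card =
      (s.image fun x => (f x, g (ψ x))).card := by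
    refine card_image_of_injOn fun p hp q hq hpq => ?_
    obtain ⟨x, hx, rfl⟩ := mem_image.1 hp
    obtain ⟨y, hy, rfl⟩ := mem_image.1 hq
    exact Prod.ext hpq ((hfg x hx y hy).1 hpq)
  have hg : ((s.image fun x => (f x, g (ψ x))).image Prod.snd).card =
      (s.image fun x => (f x, g (ψ x))).card := by
    refine card_image_of_injOn fun p hp q hq hpq => ?_
    obtain ⟨x, hx, rfl⟩ := mem_image.1 hp
    obtain ⟨y, hy, rfl⟩ := mem_image.1 hq
    exact Prod.ext ((hfg x hx y hy).2 hpq) hpq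
  rw [image_image] at hf hg
  exact hf.trans (hg.symm.trans (congrArg card hst))

namespace LabFam

variable {P : LabFam V} {k : ℕ} {a : ℕ → ℕ} {φ : V → V} {i j m : ℕ} {u v : V} {I J : Finset V}

/-- The pullback of a labelled family of partitions along a map of the vertex set to itself: a set
is in the class of `J` when its image is in the class of the image of `J`, and it carries the label
of its image. -/
noncomputable def pull (P : LabFam V) (φ : V → V) : LabFam V where
  gnd := P.gnd
  vClass v := P.gnd.filter fun u => φ u ∈ P.vClass (φ v)
  cls j J := HypReg.pull P.gnd φ j (P.cls j (J.image φ))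
  vIdx v := P.vIdx (φ v)
  lbl j I := P.lbl j (I.image φ)

theorem pull_gnd : (P.pull φ).gnd = P.gnd := rfl

theorem pull_cls : (P.pull φ).cls j J = HypReg.pull P.gnd φ j (P.cls j (J.image φ)) := rfl

theorem mem_pull_vClass : u ∈ (P.pull φ).vClass v ↔ u ∈ P.gnd ∧ φ u ∈ P.vClass (φ v) :=
  mem_filter

theorem pull_addrOf (j : ℕ) (L : Finset V) : (P.pull φ).addrOf j L = P.addrOf j (L.image φ) := by
  simp only [addrOf, pull, filter_image, image_image, Function.comp_def]
  rfl

theorem pull_vClass_eq_iff (hF : P.toPartFam.IsFamily k a) (hφ : Set.MapsTo φ P.gnd P.gnd)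
    (hu : u ∈ P.gnd) (hv : v ∈ P.gnd) :
    (P.pull φ).vClass u = (P.pull φ).vClass v ↔ P.vClass (φ u) = P.vClass (φ v) := by
  refine ⟨fun h => ?_, fun h => by simp only [pull, h]⟩
  have huv : u ∈ (P.pull φ).vClass v := h ▸ mem_pull_vClass.2 ⟨hu, hF.mem_vClass_self (hφ hu)⟩
  exact hF.vClass_eq (hφ hv) (mem_pull_vClass.1 huv).2

theorem pull_cross (hF : P.toPartFam.IsFamily k a) (hφ : Set.MapsTo φ P.gnd P.gnd) (j : ℕ) :
    (P.pull φ).toPartFam.cross j = HypReg.pull P.gnd φ j (P.toPartFam.cross j) := by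
  ext S
  have hinj (hS : S ⊆ P.gnd) : Set.InjOn (P.pull φ).vClass S ↔
      Set.InjOn (fun v => P.vClass (φ v)) S :=
    forall₂_congr fun u hu => forall₂_congr fun v hv =>
      imp_congr_left (pull_vClass_eq_iff hF hφ (hS hu) (hS hv))
  rw [mem_pull, PartFam.mem_cross, PartFam.mem_cross, mem_powersetCard, pull_gnd, and_assoc]
  refine and_congr_right fun hS => and_congr_right fun hSj => ?_
  rw [hinj hS, and_iff_right (image_subset_iff.2 fun v hv => hφ (hS hv)), ← hSj, card_image_iff,
    coe_image]
  exact ⟨fun h => ⟨Set.InjOn.of_comp (g := P.vClass) h, Set.InjOn.image_of_comp h⟩,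
    fun h => h.2.comp h.1 (Set.mapsTo_image φ S)⟩

theorem image_mem_cross (hF : P.toPartFam.IsFamily k a) (hφ : Set.MapsTo φ P.gnd P.gnd)
    (hJ : J ∈ (P.pull φ).toPartFam.cross j) : J.image φ ∈ P.toPartFam.cross j := by
  rw [pull_cross hF hφ] at hJ
  exact (mem_pull.1 hJ).2

theorem injOn_of_mem_pull_cross (hF : P.toPartFam.IsFamily k a) (hφ : Set.MapsTo φ P.gnd P.gnd)
    (hJ : J ∈ (P.pull φ).toPartFam.cross j) : Set.InjOn φ J := by
  rw [pull_cross hF hφ] at hJ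
  exact injOn_of_mem_pull (fun _ => PartFam.card_of_mem_cross) hJ

theorem pull_polyad (hF : P.toPartFam.IsFamily k a) (hφ : Set.MapsTo φ P.gnd P.gnd) (h1 : 1 ≤ j)
    (hJ : J ∈ (P.pull φ).toPartFam.cross i) :
    (P.pull φ).toPartFam.polyad j J = HypReg.pull P.gnd φ j (P.toPartFam.polyad j (J.image φ)) := by
  ext T
  rw [mem_pull]
  rcases h1.eq_or_lt with rfl | h2
  · by_cases hT : T.card = 1
    · obtain ⟨v, rfl⟩ := card_eq_one.1 hT
      simp only [PartFam.singleton_mem_polyad_one, image_singleton, mem_pull_vClass,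
        exists_mem_image, mem_powersetCard, singleton_subset_iff, card_singleton, and_true]
      tauto
    · refine iff_of_false (fun h => hT ?_) fun h => hT (mem_powersetCard.1 h.1).2
      obtain ⟨u, -, v, -, rfl⟩ := PartFam.mem_polyad_one.1 h
      exact card_singleton v
  · rw [PartFam.mem_polyad (by omega), PartFam.mem_polyad (by omega)]
    simp only [mem_powersetCard_image (injOn_of_mem_pull_cross hF hφ hJ), pull_cls, mem_pull]
    constructor
    · rintro ⟨S, hS, hT, hTS⟩
      exact ⟨hT, _, ⟨S, hS, rfl⟩, hTS⟩
    · rintro ⟨hT, _, ⟨S, hS, rfl⟩, hTS⟩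
      exact ⟨S, hS, hT, hTS⟩

theorem pull_polyCliques (hF : P.toPartFam.IsFamily k a) (hφ : Set.MapsTo φ P.gnd P.gnd)
    (h1 : 1 ≤ i) (hk : i ≤ k - 1) (hJ : J ∈ (P.pull φ).toPartFam.cross m) :
    (P.pull φ).toPartFam.polyCliques (i + 1) J =
      HypReg.pull P.gnd φ (i + 1) (P.toPartFam.polyCliques (i + 1) (J.image φ)) := by
  simp only [PartFam.polyCliques, Nat.add_sub_cancel, pull_polyad hF hφ h1 hJ, pull_gnd,
    pull_cross hF hφ]
  exact KsetC_pull hφ h1 (filter_subset _ _) fun T hT => PartFam.card_of_mem_cross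
    (hF.polyad_subset_cross hk h1 (image_mem_cross hF hφ hJ) hT)

theorem pull_polyCliques_subset_cross (hF : P.toPartFam.IsFamily k a)
    (hφ : Set.MapsTo φ P.gnd P.gnd) (h1 : 1 ≤ i) (hk : i ≤ k - 1)
    (hJ : J ∈ (P.pull φ).toPartFam.cross m) :
    (P.pull φ).toPartFam.polyCliques (i + 1) J ⊆ (P.pull φ).toPartFam.cross (i + 1) := by
  rw [pull_polyCliques hF hφ h1 hk hJ, pull_cross hF hφ]
  exact fun I hI => mem_pull.2 ((mem_pull.1 hI).imp_right fun h =>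
    hF.polyCliques_subset_cross h1 hk (image_mem_cross hF hφ hJ) h)

theorem mem_pull_cls_self (hF : P.toPartFam.IsFamily k a) (hφ : Set.MapsTo φ P.gnd P.gnd)
    (h2 : 2 ≤ j) (hk : j ≤ k - 1) (hJ : J ∈ (P.pull φ).toPartFam.cross j) :
    J ∈ (P.pull φ).cls j J :=
  mem_pull.2 ⟨(mem_filter.1 hJ).1, hF.mem_cls_self h2 hk (image_mem_cross hF hφ hJ)⟩

theorem pull_cls_eq_iff (hF : P.toPartFam.IsFamily k a) (hφ : Set.MapsTo φ P.gnd P.gnd) (h2 : 2 ≤ j)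
    (hk : j ≤ k - 1) (hI : I ∈ (P.pull φ).toPartFam.cross j)
    (hJ : J ∈ (P.pull φ).toPartFam.cross j) :
    (P.pull φ).cls j I = (P.pull φ).cls j J ↔ P.cls j (I.image φ) = P.cls j (J.image φ) := by
  refine ⟨fun h => ?_, fun h => by rw [pull_cls, pull_cls, h]⟩
  have hIJ : I ∈ (P.pull φ).cls j J := h ▸ mem_pull_cls_self hF hφ h2 hk hI
  exact hF.cls_eq h2 hk (image_mem_cross hF hφ hJ) (mem_pull.1 hIJ).2

theorem card_image_pull_vClass (hF : P.toPartFam.IsFamily k a) (hφ : Set.MapsTo φ P.gnd P.gnd)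
    (hv : ∀ v ∈ P.gnd, ∃ u ∈ P.vClass v, φ u = u) : (P.gnd.image (P.pull φ).vClass).card = a 1 := by
  rw [← hF.card_image_vClass]
  refine card_image_eq_card_image φ hφ (fun u hu v hv => pull_vClass_eq_iff hF hφ hu hv)
    fun v hvg => ?_
  obtain ⟨u, hu, hφu⟩ := hv v hvg
  exact ⟨u, hF.vClass_subset hvg hu, hφu.symm ▸ hF.vClass_eq hvg hu⟩

theorem card_image_pull_cls (hF : P.toPartFam.IsFamily k a) (hφ : Set.MapsTo φ P.gnd P.gnd)
    (h1 : 1 ≤ i) (hk : i + 1 ≤ k - 1)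
    (hcls : ∀ J ∈ P.toPartFam.cross (i + 1), ∃ I ∈ P.cls (i + 1) J, ∀ v ∈ I, φ v = v)
    (hJ : J ∈ (P.pull φ).toPartFam.cross (i + 1)) :
    (((P.pull φ).toPartFam.polyCliques (i + 1) J).image ((P.pull φ).cls (i + 1))).card =
      a (i + 1) := by
  have hJ' := image_mem_cross hF hφ hJ
  have hcr := pull_polyCliques_subset_cross hF hφ h1 (by omega) hJ
  rw [← hF.card_image_cls (by omega) hk hJ']
  rw [pull_polyCliques hF hφ h1 (by omega) hJ] at hcr ⊢
  refine card_image_eq_card_image (image φ) (fun I hI => (mem_pull.1 hI).2)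
    (fun I hI I' hI' => pull_cls_eq_iff hF hφ (by omega) hk (hcr hI) (hcr hI')) fun I hI => ?_
  have hIc := hF.polyCliques_subset_cross h1 (by omega) hJ' hI
  obtain ⟨I', hI', hfix⟩ := hcls I hIc
  have hI'c := hF.cls_subset_cross (by omega) hk hIc hI'
  refine ⟨I', mem_pull.2 ⟨(mem_filter.1 hI'c).1, ?_⟩, ?_⟩ <;> rw [image_eq_self hfix]
  · exact hF.polyCliques_subset_polyCliques h1 (by omega) hJ' hI
      (hF.cls_subset_polyCliques (by omega) hk hIc hI')
  · exact hF.cls_eq (by omega) hk hIc hI'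

theorem pull_isFamily (hF : P.toPartFam.IsFamily k a) (hφ : Set.MapsTo φ P.gnd P.gnd)
    (hv : ∀ v ∈ P.gnd, ∃ u ∈ P.vClass v, φ u = u)
    (hcls : ∀ j, 2 ≤ j → j ≤ k - 1 → ∀ J ∈ P.toPartFam.cross j, ∃ I ∈ P.cls j J, ∀ v ∈ I, φ v = v) :
    (P.pull φ).toPartFam.IsFamily k a := by
  refine ⟨fun v hv => mem_pull_vClass.2 ⟨hv, hF.mem_vClass_self (hφ hv)⟩,
    fun v _ => filter_subset _ _, fun u hu v hv huv => (pull_vClass_eq_iff hF hφ hu hv).2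
      (hF.vClass_eq (hφ hv) (mem_pull_vClass.1 huv).2),
    card_image_pull_vClass hF hφ hv, hF.le_a_one, fun j h2 hk => ?_⟩
  obtain ⟨i, rfl⟩ := Nat.exists_eq_add_of_le' (one_le_two.trans h2)
  have h1 : 1 ≤ i := by omega
  refine ⟨fun J => mem_pull_cls_self hF hφ h2 hk, fun J hJ I hI => ?_, fun J hJ => ?_,
    fun J => pull_polyCliques_subset_cross hF hφ h1 (by omega),
    fun J => card_image_pull_cls hF hφ h1 hk (hcls _ h2 hk)⟩
  · rw [pull_cls, pull_cls, hF.cls_eq h2 hk (image_mem_cross hF hφ hJ) (mem_pull.1 hI).2]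
  · rw [pull_polyCliques hF hφ h1 (by omega) hJ]
    exact fun I hI => mem_pull.2 ((mem_pull.1 hI).imp_right fun h =>
      hF.cls_subset_polyCliques h2 hk (image_mem_cross hF hφ hJ) h)

theorem polyad_image_subset_of_pull_polyad_eq (hF : P.toPartFam.IsFamily k a)
    (hφ : Set.MapsTo φ P.gnd P.gnd) (hφφ : ∀ v ∈ P.gnd, φ (φ v) = φ v) (h1 : 1 ≤ j) (hk : j ≤ k - 1)
    (hI : I ∈ (P.pull φ).toPartFam.cross m) (hJ : J ∈ (P.pull φ).toPartFam.cross m)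
    (h : (P.pull φ).toPartFam.polyad j I = (P.pull φ).toPartFam.polyad j J) :
    P.toPartFam.polyad j (I.image φ) ⊆ P.toPartFam.polyad j (J.image φ) := by
  have hI' := image_mem_cross hF hφ hI
  refine hF.polyad_subset_polyad hk h1 (image_mem_cross hF hφ hJ) fun T hT => ?_
  have hfix : ∀ v ∈ T, φ v = v := fun v hv => by
    obtain ⟨u, hu, rfl⟩ := mem_image.1 ((mem_powersetCard.1 hT).1 hv)
    exact hφφ u (PartFam.subset_gnd_of_mem_cross hI hu)
  have hTI : T ∈ HypReg.pull P.gnd φ j (P.toPartFam.polyad j (I.image φ)) :=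
    mem_pull.2 ⟨powersetCard_mono (PartFam.subset_gnd_of_mem_cross hI') hT,
      (image_eq_self hfix).symm ▸ hF.mem_polyad_self hk h1 hI' hT⟩
  rw [← pull_polyad hF hφ h1 hI, h, pull_polyad hF hφ h1 hJ] at hTI
  simpa only [image_eq_self hfix] using (mem_pull.1 hTI).2

theorem pull_polyAt (hF : P.toPartFam.IsFamily k a) (hφ : Set.MapsTo φ P.gnd P.gnd) (h1 : 1 ≤ j)
    (x : Addr) : (P.pull φ).polyAt j x = HypReg.pull P.gnd φ j (P.polyAt j x) := by
  ext T
  rw [mem_pull]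
  rcases h1.eq_or_lt with rfl | h2
  · by_cases hT : T.card = 1
    · obtain ⟨v, rfl⟩ := card_eq_one.1 hT
      have hmem (Q : LabFam V) (w : V) : {w} ∈ Q.polyAt 1 x ↔ w ∈ Q.gnd ∧ Q.vIdx w ∈ x.1 := by
        simp [mem_polyAt_one]
      rw [image_singleton, hmem, hmem, mem_powersetCard, singleton_subset_iff, card_singleton,
        and_iff_left rfl, pull_gnd]
      exact and_congr_right fun hv => (and_iff_right (hφ hv)).symm
    · refine iff_of_false (fun h => hT ?_) fun h => hT (mem_powersetCard.1 h.1).2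
      exact PartFam.card_of_mem_cross (polyAt_subset_cross le_rfl h)
  · simp only [mem_polyAt h2, pull_cross hF hφ, mem_pull, pull_addrOf]
    constructor
    · rintro ⟨B, hB, ⟨hT, hTc⟩, h⟩
      exact ⟨hT, B, hB, hTc, h⟩
    · rintro ⟨hT, B, hB, hTc, h⟩
      exact ⟨B, hB, ⟨hT, hTc⟩, h⟩

theorem IsLabeled.pull (hP : P.IsLabeled k a) (hφ : Set.MapsTo φ P.gnd P.gnd)
    (hφφ : ∀ v ∈ P.gnd, φ (φ v) = φ v) (hv : ∀ v ∈ P.gnd, ∃ u ∈ P.vClass v, φ u = u)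
    (hcls : ∀ j, 2 ≤ j → j ≤ k - 1 → ∀ J ∈ P.toPartFam.cross j,
      ∃ I ∈ P.cls j J, ∀ v ∈ I, φ v = v) : (P.pull φ).IsLabeled k a := by
  have hF := hP.isFamily
  refine ⟨pull_isFamily hF hφ hv hcls, fun v hv => hP.2.1 _ (hφ hv), fun u hu v hv => ?_,
    fun j h2 hk => ⟨fun I hI => (hP.2.2.2 j h2 hk).1 _ (image_mem_cross hF hφ hI),
      fun I hI I' hI' => hP.lbl_eq h2 hk (image_mem_cross hF hφ hI) (mem_pull.1 hI').2,
      fun I hI J hJ hpol hlbl => ?_⟩⟩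
  · rw [pull_vClass_eq_iff hF hφ hu hv]
    exact hP.vIdx_eq_iff (hφ hu) (hφ hv)
  · have h1 : 1 ≤ j - 1 := by omega
    rw [pull_cls_eq_iff hF hφ h2 hk hI hJ]
    refine (hP.2.2.2 j h2 hk).2.2 _ (image_mem_cross hF hφ hI) _ (image_mem_cross hF hφ hJ)
      (Subset.antisymm ?_ ?_) hlbl
    · exact polyad_image_subset_of_pull_polyad_eq hF hφ hφφ h1 (by omega) hI hJ hpol
    · exact polyad_image_subset_of_pull_polyad_eq hF hφ hφφ h1 (by omega) hJ hI hpol.symm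

end LabFam

namespace LabFam

variable {P : LabFam V} {k : ℕ} {a : ℕ → ℕ} {φ : V → V} {i : ℕ} {K : Finset V} {x : Addr}
  {ε δ ν c : ℝ}

theorem pull_polyadReg (hF : P.toPartFam.IsFamily k a) (hφ : Set.MapsTo φ P.gnd P.gnd)
    (hε : 0 < ε) (hε1 : ε ≤ 1) (hδ : 0 < δ) (hδ1 : δ ≤ 1)
    (hν : ((P.gnd.filter fun v => φ v ≠ v).card : ℝ) ≤ ν * P.gnd.card)
    (hνc : 3 * ν ≤ δ * ε * c) (ha : ∀ j, 1 ≤ j → j ≤ k - 1 → 1 ≤ a j)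
    (hc : ∀ K ∈ P.toPartFam.cross k,
      c * (P.gnd.card : ℝ) ^ k ≤ (P.toPartFam.polyCliques k K).card)
    (hreg : P.toPartFam.PolyadReg k a ε) : (P.pull φ).toPartFam.PolyadReg k a (ε + δ) := by
  intro K hK j h2 hk J hJ
  obtain ⟨i, rfl⟩ := Nat.exists_eq_add_of_le' (one_le_two.trans h2)
  have hJc := PartFam.mem_cross_of_mem_powersetCard hK hJ
  have hJ' := image_mem_cross hF hφ hJc
  have hJK : J.image φ ∈ (K.image φ).powersetCard (i + 1) :=
    (mem_powersetCard_image (injOn_of_mem_pull_cross hF hφ hK)).2 ⟨J, hJ, rfl⟩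
  have haj : (1 : ℝ) ≤ a (i + 1) := by exact_mod_cast ha (i + 1) (by omega) hk
  simp only [Nat.add_sub_cancel]
  rw [pull_polyad hF hφ (by omega) hJc, pull_polyad hF hφ (by omega) hK, pull_cross hF hφ]
  exact RegPairC.pull hφ (by omega) (filter_subset _ _)
    (fun T hT => PartFam.card_of_mem_cross (hF.polyad_subset_cross (by omega) (by omega) hJ' hT))
    (fun e he => mem_pull_iff he) hε hε1 hδ hδ1 (by positivity)
    (div_le_one_of_le₀ haj (by positivity))
    (Or.inr (three_mul_card_moved_le hν (mul_pos hδ hε).le hνc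
      (hF.mul_pow_le_card_polyCliques hc h2 hk hJ')))
    (hreg _ (image_mem_cross hF hφ hK) (i + 1) h2 hk _ hJK)

theorem IsLabeled.polyCliques_subset_KsetC_polyAt (hP : P.IsLabeled k a) (h1 : 1 ≤ i)
    (hk : i ≤ k - 1)
    (hK : K ∈ KsetC P.gnd (P.toPartFam.cross (i + 1)) i (i + 1) (P.polyAt i x)) :
    P.toPartFam.polyCliques (i + 1) K ⊆
      KsetC P.gnd (P.toPartFam.cross (i + 1)) i (i + 1) (P.polyAt i x) := by
  have hKc := PartFam.KsetC_subset_cross h1 (polyAt_subset_cross h1) hK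
  exact fun S hS => mem_KsetC.2 ((PartFam.mem_polyCliques.1 hS).imp_right fun h T hT =>
    hP.polyad_subset_polyAt h1 hk hKc (mem_KsetC.1 hK).2 (h T hT))

theorem pull_isDensPartition (hP : P.IsLabeled k a) (h2k : 2 ≤ k)
    (hφ : Set.MapsTo φ P.gnd P.gnd) (hε : 0 < ε) (hε1 : ε ≤ 1) (hδ : 0 < δ) (hδ1 : δ ≤ 1)
    (hν : ((P.gnd.filter fun v => φ v ≠ v).card : ℝ) ≤ ν * P.gnd.card)
    (hνc : 3 * ν ≤ δ * ε * c)
    (hc : ∀ K ∈ P.toPartFam.cross k,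
      c * (P.gnd.card : ℝ) ^ k ≤ (P.toPartFam.polyCliques k K).card)
    {d : Addr → ℝ} (hd : DensityFun k a d) {H : Finset (Finset V)}
    (hH : P.IsDensPartition k a ε d H) : (P.pull φ).IsDensPartition k a (ε + δ) d H := by
  intro x hx
  obtain ⟨i, rfl⟩ := Nat.exists_eq_add_of_le' (one_le_two.trans h2k)
  have h1 : 1 ≤ i := by omega
  have hreg := hH x hx
  simp only [Nat.add_sub_cancel] at hreg ⊢
  rw [pull_polyAt hP.isFamily hφ h1, pull_cross hP.isFamily hφ]
  refine RegPairC.pull hφ h1 (filter_subset _ _)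
    (fun T hT => PartFam.card_of_mem_cross (polyAt_subset_cross h1 hT)) (fun _ _ => Iff.rfl)
    hε hε1 hδ hδ1 (hd x hx).1 (hd x hx).2 ?_ hreg
  refine (eq_empty_or_nonempty _).imp_right fun ⟨K, hK⟩ =>
    three_mul_card_moved_le hν (mul_pos hδ hε).le hνc
      ((hc K (PartFam.KsetC_subset_cross h1 (polyAt_subset_cross h1) hK)).trans ?_)
  exact_mod_cast card_le_card (hP.polyCliques_subset_KsetC_polyAt h1 le_rfl hK)

theorem exists_mem_cls_fixed (hF : P.toPartFam.IsFamily k a)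
    (hν : ((P.gnd.filter fun v => φ v ≠ v).card : ℝ) ≤ ν * P.gnd.card) (hνc : ν < c)
    (hc : ∀ K ∈ P.toPartFam.cross k,
      c * (P.gnd.card : ℝ) ^ k ≤ (P.toPartFam.polyCliques k K).card)
    {j : ℕ} (h2 : 2 ≤ j) (hk : j ≤ k - 1) {J : Finset V} (hJ : J ∈ P.toPartFam.cross j) :
    ∃ I ∈ P.cls j J, ∀ v ∈ I, φ v = v := by
  obtain ⟨i, rfl⟩ := Nat.exists_eq_add_of_le' (one_le_two.trans h2)
  by_contra! hno
  have hsub : P.cls (i + 1) J ⊆ moved P.gnd φ (i + 1) := fun I hI =>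
    mem_filter.2 ⟨(mem_filter.1 (hF.cls_subset_cross h2 hk hJ hI)).1, hno I hI⟩
  have hgnd : 0 < P.gnd.card := card_pos.2 ((card_pos.1 ((PartFam.card_of_mem_cross hJ).symm ▸
    i.succ_pos)).mono (PartFam.subset_gnd_of_mem_cross hJ))
  have hpow : (0 : ℝ) < (P.gnd.card : ℝ) ^ (i + 1) := by positivity
  refine hνc.not_ge (le_of_mul_le_mul_right ?_ hpow)
  calc c * (P.gnd.card : ℝ) ^ (i + 1) ≤ (P.cls (i + 1) J).card :=
        hF.mul_pow_le_card_cls hc h2 hk hJ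
    _ ≤ (P.gnd.filter fun v => φ v ≠ v).card * (P.gnd.card : ℝ) ^ i := by
        exact_mod_cast (card_le_card hsub).trans card_moved_le
    _ ≤ ν * P.gnd.card * (P.gnd.card : ℝ) ^ i := by gcongr
    _ = ν * (P.gnd.card : ℝ) ^ (i + 1) := by ring

end LabFam

/-! ### Equalizing the vertex classes -/

theorem exists_forall_card_fiber_eq {α β : Type*} [DecidableEq β] [Nonempty β] {L : Finset α}
    {I : Finset β} {r : β → ℕ} (hr : ∑ i ∈ I, r i = L.card) :
    ∃ h : α → β, (∀ v ∈ L, h v ∈ I) ∧ ∀ i ∈ I, (L.filter (h · = i)).card = r i := by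
  let S := I.sigma fun i => range (r i)
  have hS {p} : p ∈ S ↔ p.1 ∈ I ∧ p.2 < r p.1 := by simp [S]
  let e : L ≃ S := equivOfCardEq (by simp [S, hr])
  let h : α → β := fun v => if hv : v ∈ L then (e ⟨v, hv⟩).1.1 else Classical.arbitrary β
  have hh (v : L) : h v = (e v).1.1 := dif_pos v.2
  refine ⟨h, fun v hv => (hh ⟨v, hv⟩).symm ▸ (hS.1 (e ⟨v, hv⟩).2).1, fun i hi => ?_⟩
  rw [← card_range (r i)]
  refine card_bij' (fun v hv => (e ⟨v, (mem_filter.1 hv).1⟩).1.2)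
    (fun n hn => (e.symm ⟨⟨i, n⟩, hS.2 ⟨hi, mem_range.1 hn⟩⟩).1) ?_ ?_ ?_ ?_
  · intro v hv
    obtain ⟨hvL, rfl⟩ := mem_filter.1 hv
    rw [hh ⟨v, hvL⟩]
    exact mem_range.2 (hS.1 (e ⟨v, hvL⟩).2).2
  · exact fun n hn => mem_filter.2 ⟨coe_mem _, by rw [hh, e.apply_symm_apply]⟩
  · intro v hv
    obtain ⟨hvL, rfl⟩ := mem_filter.1 hv
    simp [hh ⟨v, hvL⟩]
  · simp

theorem exists_subset_forall_card_fiber_eq {α β : Type*} [DecidableEq β]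
    {W : Finset α} {g : α → β} {I : Finset β} {r : β → ℕ}
    (hr : ∀ i ∈ I, r i ≤ (W.filter (g · = i)).card) :
    ∃ U ⊆ W, (∀ v ∈ U, g v ∈ I) ∧ ∀ i ∈ I, (U.filter (g · = i)).card = r i := by
  choose! U hUW hUr using fun i hi => exists_subset_card_eq (hr i hi)
  have hU {i v} (hi : i ∈ I) (hv : v ∈ U i) : v ∈ W ∧ g v = i := mem_filter.1 (hUW i hi hv)
  refine ⟨I.biUnion U, fun v hv => ?_, fun v hv => ?_, fun i hi => ?_⟩
  · obtain ⟨i, hi, hv⟩ := mem_biUnion.1 hv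
    exact (hU hi hv).1
  · obtain ⟨i, hi, hv⟩ := mem_biUnion.1 hv
    exact (hU hi hv).2 ▸ hi
  · rw [← hUr i hi]
    congr 1
    ext v
    simp only [mem_filter, mem_biUnion]
    constructor
    · rintro ⟨⟨j, hj, hv⟩, rfl⟩
      rwa [(hU hj hv).2]
    · exact fun hv => ⟨⟨i, hi, hv⟩, (hU hi hv).2⟩

theorem exists_relabelling {α β : Type*} [DecidableEq β] [Nonempty β]
    {W : Finset α} {I : Finset β} {t : β → ℕ} (g : α → β) (ht : ∑ i ∈ I, t i = W.card) :
    ∃ h : α → β, (∀ v ∈ W, h v ∈ I) ∧ (∀ i ∈ I, (W.filter (h · = i)).card = t i) ∧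
      (∀ i ∈ I, 0 < t i → 0 < (W.filter (g · = i)).card → ∃ u ∈ W, g u = i ∧ h u = i) ∧
      (W.filter fun v => h v ≠ g v).card ≤ ∑ i ∈ I, (t i - (W.filter (g · = i)).card) := by
  set s : β → ℕ := fun i => (W.filter (g · = i)).card
  obtain ⟨U, hUW, hgU, hU⟩ := exists_subset_forall_card_fiber_eq (r := fun i => min (s i) (t i))
    (fun i (_ : i ∈ I) => min_le_left _ _)
  have hrest : ∑ i ∈ I, (t i - s i) = (W \ U).card := by
    rw [card_sdiff_of_subset hUW, card_eq_sum_card_fiberwise hgU, sum_congr rfl hU, ← ht]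
    refine Nat.eq_sub_of_add_eq ?_
    rw [← sum_add_distrib]
    exact sum_congr rfl fun i _ => by omega
  obtain ⟨l, hlI, hl⟩ := exists_forall_card_fiber_eq hrest
  refine ⟨U.piecewise g l, fun v hv => ?_, fun i hi => ?_, fun i hi hti hsi => ?_, ?_⟩
  · by_cases hvU : v ∈ U
    · rw [piecewise_eq_of_mem _ _ _ hvU]
      exact hgU v hvU
    · rw [piecewise_eq_of_notMem _ _ _ hvU]
      exact hlI v (mem_sdiff.2 ⟨hv, hvU⟩)
  · rw [← union_sdiff_of_subset hUW, filter_union, card_union_of_disjoint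
        (disjoint_filter_filter disjoint_sdiff),
      filter_congr (q := (g · = i)) fun v hv => by rw [piecewise_eq_of_mem _ _ _ hv],
      filter_congr (s := W \ U) (q := (l · = i)) fun v hv => by
        rw [piecewise_eq_of_notMem _ _ _ (mem_sdiff.1 hv).2],
      hU i hi, hl i hi]
    omega
  · obtain ⟨u, hu⟩ := card_pos.1 ((lt_min hsi hti).trans_eq (hU i hi).symm)
    obtain ⟨huU, rfl⟩ := mem_filter.1 hu
    exact ⟨u, hUW huU, rfl, piecewise_eq_of_mem _ _ _ huU⟩
  · rw [hrest]
    refine card_le_card fun v hv => mem_sdiff.2 ⟨(mem_filter.1 hv).1, fun hvU => ?_⟩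
    exact (mem_filter.1 hv).2 (piecewise_eq_of_mem _ _ _ hvU)

theorem exists_idempotent_card_fiber_eq {α β : Type*} [DecidableEq α] [DecidableEq β]
    {W : Finset α} {I : Finset β} {t : β → ℕ} (g : α → β)
    (ht : ∑ i ∈ I, t i = W.card) (ht0 : ∀ i ∈ I, 0 < t i)
    (hg0 : ∀ i ∈ I, 0 < (W.filter (g · = i)).card) :
    ∃ φ : α → α, Set.MapsTo φ W W ∧ (∀ v ∈ W, φ (φ v) = φ v) ∧
      (∀ i ∈ I, (W.filter fun v => g (φ v) = i).card = t i) ∧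
      (∀ i ∈ I, ∃ u ∈ W, g u = i ∧ φ u = u) ∧
      (W.filter fun v => φ v ≠ v).card ≤ ∑ i ∈ I, (t i - (W.filter (g · = i)).card) := by
  rcases W.eq_empty_or_nonempty with rfl | ⟨w, -⟩
  · have hI : I = ∅ := eq_empty_of_forall_notMem fun i hi => by simpa using hg0 i hi
    exact ⟨id, by simp [hI]⟩
  have : Nonempty α := ⟨w⟩
  have : Nonempty β := ⟨g w⟩
  obtain ⟨h, hhI, hh, hrep, hcard⟩ := exists_relabelling g ht
  choose! rep hrepW hgrep hhrep using fun i hi => hrep i hi (ht0 i hi) (hg0 i hi)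
  let φ : α → α := fun v => if h v = g v then v else rep (h v)
  have hφ {v} (hv : h v = g v) : φ v = v := if_pos hv
  have hφ' {v} (hv : h v ≠ g v) : φ v = rep (h v) := if_neg hv
  have hφrep {i} (hi : i ∈ I) : φ (rep i) = rep i := hφ ((hhrep i hi).trans (hgrep i hi).symm)
  have hgφ {v} (hv : v ∈ W) : g (φ v) = h v := by
    by_cases hvg : h v = g v
    · rw [hφ hvg, hvg]
    · rw [hφ' hvg, hgrep _ (hhI v hv)]
  refine ⟨φ, fun v hv => ?_, fun v hv => ?_, fun i hi => ?_, fun i hi => ?_, ?_⟩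
  · by_cases hvg : h v = g v
    · rwa [hφ hvg]
    · rw [hφ' hvg]
      exact hrepW _ (hhI v hv)
  · by_cases hvg : h v = g v
    · rw [hφ hvg, hφ hvg]
    · rw [hφ' hvg, hφrep (hhI v hv)]
  · rw [← hh i hi, filter_congr fun v hv => by rw [hgφ hv]]
  · exact ⟨rep i, hrepW i hi, hgrep i hi, hφrep hi⟩
  · exact (card_le_card (monotone_filter_right _ fun v _ hv hvg => hv (hφ hvg))).trans hcard

theorem sum_Icc_div_add_ite_le_mod (n : ℕ) {q : ℕ} (hq : 0 < q) :
    ∑ i ∈ Icc 1 q, (n / q + if i ≤ n % q then 1 else 0) = n := by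
  have hlt := Nat.mod_lt n hq
  have hfilter : (Icc 1 q).filter (· ≤ n % q) = Icc 1 (n % q) := by
    ext i
    simp only [mem_filter, mem_Icc]
    omega
  rw [sum_add_distrib, sum_const, sum_boole, hfilter]
  simpa using Nat.div_add_mod n q

theorem sum_equalized_tsub_le {q : ℕ} (hq : 1 ≤ q) {n : ℕ} {lam : ℝ} {s : ℕ → ℕ} (hlam : 0 ≤ lam)
    (hs : ∀ i ∈ Icc 1 q, |(s i : ℝ) - (n : ℝ) / q| ≤ lam * n / q) :
    ((∑ i ∈ Icc 1 q, ((n / q + if i ≤ n % q then 1 else 0) - s i) : ℕ) : ℝ) ≤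
      lam * n + q := by
  have : (0 : ℝ) < q := by exact_mod_cast hq
  have hterm : ∀ i ∈ Icc 1 q,
      (((n / q + if i ≤ n % q then 1 else 0) - s i : ℕ) : ℝ) ≤ lam * n / q + 1 := by
    intro i hi
    have hle : n / q + (if i ≤ n % q then 1 else 0) ≤ n / q + 1 := by split_ifs <;> omega
    have hdiv : ((n / q : ℕ) : ℝ) ≤ n / q := Nat.cast_div_le
    have hsi := (abs_le.1 (hs i hi)).1
    rcases le_total (n / q + 1) (s i) with h | h
    · rw [Nat.sub_eq_zero_of_le (hle.trans h), Nat.cast_zero]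
      positivity
    · refine (Nat.cast_le.2 (Nat.sub_le_sub_right hle _)).trans ?_
      rw [Nat.cast_sub h]
      push_cast
      linarith
  rw [Nat.cast_sum]
  refine (sum_le_card_nsmul _ _ _ hterm).trans_eq ?_
  rw [Nat.card_Icc, Nat.add_sub_cancel, nsmul_eq_mul]
  field_simp

namespace LabFam

variable {P : LabFam V} {k : ℕ} {a : ℕ → ℕ}

theorem IsLabeled.filter_vIdx_eq (hP : P.IsLabeled k a) {v : V} (hv : v ∈ P.gnd) :
    P.gnd.filter (P.vIdx · = P.vIdx v) = P.vClass v := by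
  ext u
  rw [mem_filter]
  refine ⟨fun h => (hP.isFamily.mem_vClass_iff h.1 hv).2 ((hP.vIdx_eq_iff h.1 hv).1 h.2),
    fun h => ?_⟩
  have hu := hP.isFamily.vClass_subset hv h
  exact ⟨hu, (hP.vIdx_eq_iff hu hv).2 ((hP.isFamily.mem_vClass_iff hu hv).1 h)⟩

theorem IsLabeled.image_vIdx (hP : P.IsLabeled k a) : P.gnd.image P.vIdx = Icc 1 (a 1) := by
  refine eq_of_subset_of_card_le (image_subset_iff.2 fun v hv => mem_Icc.2 (hP.2.1 v hv)) ?_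
  rw [card_image_eq_card_image (f := P.vIdx) id (fun _ => id)
    (fun u hu v hv => hP.vIdx_eq_iff hu hv) fun v hv => ⟨v, hv, rfl⟩,
    hP.isFamily.card_image_vClass, Nat.card_Icc, Nat.add_sub_cancel]

theorem IsLabeled.card_pull_vClass (hP : P.IsLabeled k a) {φ : V → V}
    (hφ : Set.MapsTo φ P.gnd P.gnd) {v : V} (hv : v ∈ P.gnd) :
    ((P.pull φ).vClass v).card =
      (P.gnd.filter fun u => P.vIdx (φ u) = P.vIdx (φ v)).card := by
  congr 1
  ext u
  rw [mem_pull_vClass, mem_filter]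
  refine and_congr_right fun hu => ?_
  rw [hP.isFamily.mem_vClass_iff (hφ hu) (hφ hv), hP.vIdx_eq_iff (hφ hu) (hφ hv)]

theorem IsLabeled.exists_equalizing (hP : P.IsLabeled k a) (ha : 1 ≤ a 1) {lam : ℝ}
    (hn : (a 1 : ℝ) ≤ lam * P.gnd.card)
    (hsize : ∀ v ∈ P.gnd, |((P.vClass v).card : ℝ) - (P.gnd.card : ℝ) / (a 1 : ℝ)|
      ≤ lam * (P.gnd.card : ℝ) / (a 1 : ℝ)) :
    ∃ φ : V → V, Set.MapsTo φ P.gnd P.gnd ∧ (∀ v ∈ P.gnd, φ (φ v) = φ v) ∧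
      (∀ v ∈ P.gnd, ∃ u ∈ P.vClass v, φ u = u) ∧
      (∀ v ∈ P.gnd, ((P.pull φ).vClass v).card = P.gnd.card / a 1 ∨
        ((P.pull φ).vClass v).card = P.gnd.card / a 1 + 1) ∧
      ((P.gnd.filter fun v => φ v ≠ v).card : ℝ) ≤ 2 * lam * P.gnd.card := by
  have hle : a 1 ≤ P.gnd.card := hP.isFamily.card_image_vClass ▸ card_image_le
  have hlam0 : 0 ≤ lam := nonneg_of_mul_nonneg_left ((Nat.cast_nonneg _).trans hn)
    (by exact_mod_cast ha.trans hle)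
  have hclass : ∀ i ∈ Icc 1 (a 1), ∃ v ∈ P.gnd,
      P.vIdx v = i ∧ P.gnd.filter (P.vIdx · = i) = P.vClass v := fun i hi => by
    obtain ⟨v, hv, rfl⟩ := mem_image.1 (hP.image_vIdx.symm ▸ hi)
    exact ⟨v, hv, rfl, hP.filter_vIdx_eq hv⟩
  obtain ⟨φ, hφ, hφφ, hcard, hrep, hmoved⟩ :=
    exists_idempotent_card_fiber_eq P.vIdx (sum_Icc_div_add_ite_le_mod P.gnd.card ha)
      (fun i _ => add_pos_of_pos_of_nonneg (Nat.div_pos hle ha) (Nat.zero_le _))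
      (fun i hi => by
        obtain ⟨v, hv, -, h⟩ := hclass i hi
        exact h ▸ card_pos.2 ⟨v, hP.isFamily.mem_vClass_self hv⟩)
  have hidx {v} (hv : v ∈ P.gnd) : P.vIdx v ∈ Icc 1 (a 1) := mem_Icc.2 (hP.2.1 v hv)
  refine ⟨φ, hφ, hφφ, fun v hv => ?_, fun v hv => ?_, ?_⟩
  · obtain ⟨u, hu, huv, hφu⟩ := hrep _ (hidx hv)
    exact ⟨u, hP.filter_vIdx_eq hv ▸ mem_filter.2 ⟨hu, huv⟩, hφu⟩
  · rw [hP.card_pull_vClass hφ hv, hcard _ (hidx (hφ hv))]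
    split_ifs
    exacts [Or.inr rfl, Or.inl rfl]
  · have hsum := sum_equalized_tsub_le ha hlam0 fun i hi => by
      obtain ⟨v, hv, -, h⟩ := hclass i hi
      exact h.symm ▸ hsize v hv
    linarith [(Nat.cast_le (α := ℝ)).2 hmoved]

end LabFam

theorem LabFam.IsLabeled.exists_isEquitPartition {P : LabFam V} {k : ℕ} {a : ℕ → ℕ}
    {lam ε δ c : ℝ} (hP : P.IsLabeled k a) (h2k : 2 ≤ k)
    (ha : ∀ j, 1 ≤ j → j ≤ k - 1 → 1 ≤ a j) (hn : (a 1 : ℝ) ≤ lam * P.gnd.card)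
    (hε : 0 < ε) (hε1 : ε ≤ 1) (hδ : 0 < δ) (hδ1 : δ ≤ 1) (hlamc : 6 * lam ≤ δ * ε * c)
    (hc : ∀ K ∈ P.toPartFam.cross k,
      c * (P.gnd.card : ℝ) ^ k ≤ (P.toPartFam.polyCliques k K).card)
    (heq : P.toPartFam.IsEquitable k a (1 / (a 1 : ℝ)) ε lam)
    {d : Addr → ℝ} (hd : DensityFun k a d) {H : Finset (Finset V)}
    (hH : P.IsDensPartition k a ε d H) :
    ∃ Q : LabFam V, Q.gnd = P.gnd ∧ Q.IsEquitPartition k a (ε + δ) d H := by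
  have ha1 : 1 ≤ a 1 := ha 1 le_rfl (by omega)
  obtain ⟨φ, hφ, hφφ, hfix, hsize, hmoved⟩ := hP.exists_equalizing ha1 hn heq.2.1
  have hν : 3 * (2 * lam) ≤ δ * ε * c := by linarith
  have hlam : 0 < lam := pos_of_mul_pos_left
    ((Nat.cast_pos.2 ha1).trans_le hn) (Nat.cast_nonneg _)
  have hδε : 0 < δ * ε := mul_pos hδ hε
  have hc0 : 0 < c := pos_of_mul_pos_right (by linarith) hδε.le
  have hνc : 2 * lam < c := by
    linarith [mul_le_of_le_one_left hc0.le (mul_le_one₀ hδ1 hε.le hε1)]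
  refine ⟨P.pull φ, pull_gnd, hP.pull hφ hφφ hfix fun j h2 hk J =>
      exists_mem_cls_fixed hP.isFamily hmoved hνc hc h2 hk, ⟨heq.1, hsize, ?_⟩, ?_⟩
  · exact pull_polyadReg hP.isFamily hφ hε hε1 hδ hδ1 hmoved hν ha hc heq.2.2
  · exact pull_isDensPartition hP h2k hφ hε hε1 hδ hδ1 hmoved hν hc hd hH

theorem le_maxA {k j : ℕ} (a : ℕ → ℕ) (h1 : 1 ≤ j) (hk : j ≤ k - 1) : a j ≤ maxA k a :=
  le_sup (mem_Icc.2 ⟨h1, hk⟩)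

theorem GoodERI.exists_forall_maxA_le {eRI : ℕ → ℕ → ℝ} (hERI : GoodERI eRI) (k : ℕ) {ε : ℝ}
    (hε : 0 < ε) :
    ∃ T : ℕ, 1 ≤ T ∧ ∀ a d, RegInstance eRI k ε a d → maxA k a ≤ T := by
  obtain ⟨T, hT⟩ := Filter.eventually_atTop.1 ((hERI.2.2.2.1 k).eventually_lt_const hε)
  refine ⟨T + 1, by omega, fun a d hR => ?_⟩
  by_contra! h
  exact (hT _ (by omega)).not_ge hR.2.2.2.1

theorem RegInstance.one_le_maxA {eRI : ℕ → ℕ → ℝ} {k : ℕ} {ε : ℝ} {a : ℕ → ℕ} {d : Addr → ℝ}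
    (hR : RegInstance eRI k ε a d) : 1 ≤ maxA k a := by
  have h2k := hR.1
  exact (hR.2.1 1 le_rfl (by omega)).trans (le_maxA a le_rfl (by omega))

theorem RegInstance.le_eCL {eRI : ℕ → ℕ → ℝ} {k : ℕ} {ε : ℝ} {a : ℕ → ℕ} {d : Addr → ℝ}
    (hR : RegInstance eRI k (ε / 3) a d) {eCL : ℝ → ℝ → ℕ → ℕ → ℝ} {mCL : ℝ → ℝ → ℕ → ℕ → ℕ}
    (hCL : CountingProp eCL mCL)
    (hRI : ∀ t k : ℕ, 1 ≤ t → 2 ≤ k →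
      eRI t k < eCL (1 / (t : ℝ)) (1 / (t : ℝ)) (k - 1) k / (4 * (t : ℝ) ^ (4 ^ k)))
    (h3 : 3 ≤ k) : ε ≤ eCL (1 / (maxA k a : ℝ)) (1 / (maxA k a : ℝ)) (k - 1) k := by
  have ht := hR.one_le_maxA
  have ht' : (1 : ℝ) ≤ maxA k a := by exact_mod_cast ht
  have hpos : 0 < 1 / (maxA k a : ℝ) := by positivity
  have he := (hCL _ _ hpos hpos (k - 1) k (by omega) (by omega)).1.1
  have hdiv : eCL (1 / (maxA k a : ℝ)) (1 / (maxA k a : ℝ)) (k - 1) k /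
      (4 * (maxA k a : ℝ) ^ (4 ^ k)) ≤
        eCL (1 / (maxA k a : ℝ)) (1 / (maxA k a : ℝ)) (k - 1) k / 4 :=
    div_le_div_of_nonneg_left he.le (by norm_num) (by linarith [one_le_pow₀ (n := 4 ^ k) ht'])
  linarith [hR.2.2.2.1, hRI (maxA k a) k ht hR.1]

theorem abs_sub_nat_div_le {n q : ℕ} (hq : 1 ≤ q) (hn : 17 * q ≤ n) {s lam : ℝ}
    (hlam : lam ≤ 1 / 16) (hs : |s - (n : ℝ) / q| ≤ lam * n / q) :
    |s - (n / q : ℕ)| ≤ 3 / 16 * (n / q : ℕ) := by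
  have hm : (17 : ℝ) ≤ (n / q : ℕ) := by exact_mod_cast (Nat.le_div_iff_mul_le hq).2 hn
  have hlow : ((n / q : ℕ) : ℝ) ≤ (n : ℝ) / q := Nat.cast_div_le
  have hhigh : (n : ℝ) / q < (n / q : ℕ) + 1 := by
    rw [← Nat.floor_div_eq_div (K := ℝ)]
    exact Nat.lt_floor_add_one _
  rw [mul_div_assoc] at hs
  have hlam' : lam * ((n : ℝ) / q) ≤ 1 / 16 * ((n : ℝ) / q) := by gcongr
  obtain ⟨hs₁, hs₂⟩ := abs_le.1 hs
  exact abs_le.2 ⟨by linarith, by linarith⟩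

theorem div_two_mul_le {n q t : ℕ} (hq : 1 ≤ q) (hqt : q ≤ t) {s lam : ℝ}
    (hlam : lam ≤ 1 / 2) (hs : |s - (n : ℝ) / q| ≤ lam * n / q) : (n : ℝ) / (2 * t) ≤ s := by
  have hlam' : lam * ((n : ℝ) / q) ≤ 1 / 2 * ((n : ℝ) / q) := by gcongr
  rw [mul_div_assoc] at hs
  calc (n : ℝ) / (2 * t) ≤ n / (2 * q) := by gcongr
    _ = 1 / 2 * (n / q) := by ring
    _ ≤ s := by linarith [(abs_le.1 hs).1]

theorem PartFam.IsFamily.cliqueConst_maxA_mul_pow_le {V : Type} [DecidableEq V] {F : PartFam V}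
    {eRI : ℕ → ℕ → ℝ} {k : ℕ} {a : ℕ → ℕ} {d : Addr → ℝ} {ε lam : ℝ} (hF : F.IsFamily k a)
    (hR : RegInstance eRI k (ε / 3) a d) (heq : F.IsEquitable k a (1 / (a 1 : ℝ)) ε lam)
    (hlam : lam ≤ 1 / 16) {eCL : ℝ → ℝ → ℕ → ℕ → ℝ} {mCL : ℝ → ℝ → ℕ → ℕ → ℕ}
    (hCL : CountingProp eCL mCL)
    (hRI : ∀ t k : ℕ, 1 ≤ t → 2 ≤ k →
      eRI t k < eCL (1 / (t : ℝ)) (1 / (t : ℝ)) (k - 1) k / (4 * (t : ℝ) ^ (4 ^ k)))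
    (hn : maxA k a * 17 ≤ F.gnd.card)
    (hm : maxA k a * mCL (1 / (maxA k a : ℝ)) (1 / (maxA k a : ℝ)) (k - 1) k ≤ F.gnd.card)
    {K : Finset V} (hK : K ∈ F.cross k) :
    cliqueConst k (maxA k a) * (F.gnd.card : ℝ) ^ k ≤ (F.polyCliques k K).card := by
  have h2k := hR.1
  have ha1 : 1 ≤ a 1 := hR.2.1 1 le_rfl (by omega)
  have ha1t : a 1 ≤ maxA k a := le_maxA a le_rfl (by omega)
  exact hF.cliqueConst_mul_pow_le_card_polyCliques h2k heq.2.2 hCL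
    (h2k.trans (hF.le_a_one.trans ha1t)) (fun j h1 hk => ⟨hR.2.1 j h1 hk, le_maxA a h1 hk⟩)
    (by linarith [hR.2.2.1]) (hR.le_eCL hCL hRI) (m := F.gnd.card / a 1)
    ((Nat.le_div_iff_mul_le ha1).2 (by grw [mul_comm, ha1t, hm]))
    (lam := 3 / 16) (by norm_num) (by norm_num)
    (fun v hv => abs_sub_nat_div_le ha1 (by grw [ha1t, mul_comm, hn]) hlam (heq.2.1 v hv))
    (fun v hv => div_two_mul_le ha1 ha1t (by linarith) (heq.2.1 v hv)) hK

theorem GoodERI.exists_forall_cliqueConst_mul_pow_le {eRI : ℕ → ℕ → ℝ} (hERI : GoodERI eRI)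
    (k T : ℕ) : ∃ n₁ : ℕ, ∀ (V : Type) [DecidableEq V] (F : PartFam V) (a d) (ε lam : ℝ),
      RegInstance eRI k (ε / 3) a d → maxA k a ≤ T → F.IsFamily k a →
      F.IsEquitable k a (1 / (a 1 : ℝ)) ε lam → lam ≤ 1 / 16 → n₁ ≤ F.gnd.card →
      ∀ K ∈ F.cross k, cliqueConst k T * (F.gnd.card : ℝ) ^ k ≤ (F.polyCliques k K).card := by
  obtain ⟨-, -, -, -, eCL, mCL, hCL, hRI⟩ := hERI
  let N (t : ℕ) : ℕ := t * max 17 (mCL (1 / (t : ℝ)) (1 / (t : ℝ)) (k - 1) k)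
  refine ⟨(range (T + 1)).sup N, fun V _ F a d ε lam hR hT hF heq hlam hn K hK => ?_⟩
  have hN : N (maxA k a) ≤ F.gnd.card :=
    (le_sup (mem_range.2 (Nat.lt_succ_of_le hT))).trans hn
  refine (mul_le_mul_of_nonneg_right (cliqueConst_anti hR.one_le_maxA hT) (by positivity)).trans
    (hF.cliqueConst_maxA_mul_pow_le hR heq hlam hCL hRI ?_ ?_ hK)
  · exact (Nat.mul_le_mul_left _ (le_max_left _ _)).trans hN
  · exact (Nat.mul_le_mul_left _ (le_max_right _ _)).trans hN

theorem le_rpow_mul_of_le_sq {x y : ℝ} (hx : 0 < x) (hx1 : x ≤ 1) (hy : 0 ≤ y)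
    (hxy : x ≤ y ^ 2) : x ≤ x ^ ((1 : ℝ) / 10) * y :=
  calc x = x ^ ((1 : ℝ) / 10) * x ^ ((9 : ℝ) / 10) := by rw [← Real.rpow_add hx]; norm_num
    _ ≤ x ^ ((1 : ℝ) / 10) * x ^ ((1 : ℝ) / 2) := by
        gcongr ?_ * ?_
        exact Real.rpow_le_rpow_of_exponent_ge hx hx1 (by norm_num)
    _ = x ^ ((1 : ℝ) / 10) * √x := by rw [Real.sqrt_eq_rpow]
    _ ≤ x ^ ((1 : ℝ) / 10) * y := by
        gcongr
        exact (Real.sqrt_le_left hy).2 hxy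

end

/-- Lemma: an almost-equitable family of partitions can be replaced by a genuinely equitable
one with almost the same parameters. -/
theorem removing_lambda (eRI : ℕ → ℕ → ℝ) (hERI : GoodERI eRI) :
    ∀ k : ℕ, 2 ≤ k → ∀ ε : ℝ, 0 < ε → ε ≤ 1 →
    ∃ lam₀ : ℝ, 0 < lam₀ ∧ ∀ lam : ℝ, 0 < lam → lam ≤ lam₀ →
    ∃ n₀ : ℕ, ∀ (V : Type) [DecidableEq V], ∀ (W : Finset V) (n : ℕ),
    W.card = n → n₀ ≤ n →
    ∀ (a : ℕ → ℕ) (d : Addr → ℝ), RegInstance eRI k (ε / 3) a d →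
    ∀ Hk : Finset (Finset V), IsKGraph W k Hk →
    ∀ P : LabFam V, P.gnd = W → P.IsLabeled k a →
    P.toPartFam.IsEquitable k a (1 / (a 1 : ℝ)) ε lam →
    P.IsDensPartition k a ε d Hk →
    ∃ Q : LabFam V, Q.gnd = W ∧
      Q.IsEquitPartition k a (ε + lam ^ ((1:ℝ)/10)) d Hk := by
  intro k h2k ε hε hε1
  obtain ⟨T, hT1, hT⟩ := hERI.exists_forall_maxA_le k (by positivity : 0 < ε / 3)
  obtain ⟨n₁, hn₁⟩ := hERI.exists_forall_cliqueConst_mul_pow_le k T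
  have hc : 0 < cliqueConst k T := cliqueConst_pos k hT1
  refine ⟨min (1 / 16) ((ε * cliqueConst k T / 6) ^ 2), by positivity, fun lam hlam hle =>
    ⟨max n₁ ⌈T / lam⌉₊, ?_⟩⟩
  rintro V _ _ n rfl hn a d hR Hk - P rfl hP heq hH
  obtain ⟨hlam16, hlamc⟩ := le_min_iff.1 hle
  obtain ⟨hn, hnT⟩ := max_le_iff.1 hn
  have ha1 : (a 1 : ℝ) ≤ lam * P.gnd.card :=
    calc (a 1 : ℝ) ≤ T := by exact_mod_cast (le_maxA a le_rfl (by omega)).trans (hT a d hR)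
      _ ≤ lam * P.gnd.card := (div_le_iff₀' hlam).1 (Nat.ceil_le.1 hnT)
  have hlam6 := le_rpow_mul_of_le_sq hlam (by linarith) (by positivity) hlamc
  exact hP.exists_isEquitPartition h2k hR.2.1 ha1 hε hε1 (by positivity)
    (Real.rpow_le_one hlam.le (by linarith) (by norm_num)) (by linarith)
    (hn₁ V P.toPartFam a d ε lam hR (hT a d hR) hP.isFamily heq hlam16 hn) heq hR.2.2.2.2 hH

end HypReg
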